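/- arXiv:1405.6477 — 10 statements merged into one kernel-verified Lean document; each statement's English description precedes it below -/
import Mathlib

section
/- For every complex number λ, the characteristic determinant of the 3n×3n matrix A factors through an n×n determinant: det(λ·I_{3n} − A) = det( (λ−1)²(λ−1+p)·I_n + ((λ−1)κ₁ + p(κ₁−κ₂))·τ·L·R ), where the entries of A, L, R are viewed as complex numbers. -/
open Matrix

/-- The 3n×3n block matrix A = [[I, τR, 0], [−κ₁L, I, −κ₂I], [−pL, 0, (1−p)I]]. -/
def Amat (n : ℕ) (L R : Matrix (Fin n) (Fin n) ℝ) (τ κ₁ κ₂ p : ℝ) :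
    Matrix (Fin 3 × Fin n) (Fin 3 × Fin n) ℝ :=
  Matrix.of fun a b =>
    ![![(1 : Matrix (Fin n) (Fin n) ℝ), τ • R, 0],
      ![(-κ₁) • L, 1, (-κ₂) • (1 : Matrix (Fin n) (Fin n) ℝ)],
      ![(-p) • L, 0, (1 - p) • (1 : Matrix (Fin n) (Fin n) ℝ)]] a.1 b.1 a.2 b.2

/-!
Put `G = diag(L, I, I)`. Then `A = I + E G`, where `E` involves `R` but not `L`. Since `E G` and
`G E` have the same characteristic polynomial, `A` may be replaced by `I + G E`, which is `A` with
`(L, R)` replaced by `(I, L R)`. All blocks of this matrix are polynomials in `L R`, so they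
commute, and by Silvester's theorem on determinants of block matrices one may first take the
determinant of the `3 × 3` matrix of these polynomials and then evaluate it at `L R`.
-/

open Polynomial

section CommRing

variable {m n S : Type*} [Fintype m] [DecidableEq m] [Fintype n] [DecidableEq n] [CommRing S]

theorem det_smul_one_sub_mul_comm (A B : Matrix n n S) (x : S) :
    (x • 1 - A * B).det = (x • 1 - B * A).det := by
  simpa only [eval_charpoly, scalar_apply, smul_one_eq_diagonal] using
    congrArg (eval x) (charpoly_mul_comm A B)

theorem det_smul_one_sub_comp_one_add_mul_comm (E G : Matrix m m (Matrix n n S)) (x : S) :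
    (x • 1 - comp m m n n S (1 + E * G)).det = (x • 1 - comp m m n n S (1 + G * E)).det := by
  have shift (E G : Matrix m m (Matrix n n S)) :
      x • 1 - comp m m n n S (1 + E * G) =
        (x - 1) • 1 - comp m m n n S E * comp m m n n S G := by
    simp only [← compAlgEquiv_apply m n S S, map_add, map_one, map_mul, sub_smul, one_smul, sub_sub]
  rw [shift, shift, det_smul_one_sub_mul_comm]

theorem det_smul_one_sub_comp_map_aeval (P : Matrix m m S[X]) (M : Matrix n n S) (x : S) :
    (x • 1 - comp m m n n S (P.map (aeval M))).det = (aeval M (x • 1 - P).det).det := by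
  let φ : Matrix m m S[X] →ₐ[S] Matrix (m × n) (m × n) S :=
    (compAlgEquiv m n S S).toAlgHom.comp (aeval M).mapMatrix
  calc (x • 1 - φ P).det = (φ (x • 1 - P)).det := by rw [map_sub, map_smul, map_one]
    _ = (aeval M (x • 1 - P).det).det :=
      (det_det _ (aeval M : S[X] →ₐ[S] Matrix n n S).toRingHom).symm

end CommRing

section Blocks

variable {S T A B : Type*} [CommRing S] [CommRing T] [Ring A] [Ring B]

/-- The `3 × 3` matrix of the blocks of `Amat`, with `L` and `R` in an arbitrary algebra over the
ring of parameters. For an algebra of square matrices, `Matrix.comp` flattens it to a matrix of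
scalars; the algebra `S[X]` serves to treat the product `L * R` as a variable. -/
def amatBlocks [Algebra S A] (L R : A) (τ κ₁ κ₂ p : S) : Matrix (Fin 3) (Fin 3) A :=
  !![1, τ • R, 0;
    -κ₁ • L, 1, -κ₂ • 1;
    -p • L, 0, (1 - p) • 1]

theorem map_amatBlocks [Algebra S A] [Algebra S B] (f : A →ₐ[S] B) (L R : A) (τ κ₁ κ₂ p : S) :
    (amatBlocks L R τ κ₁ κ₂ p).map f = amatBlocks (f L) (f R) τ κ₁ κ₂ p := by
  ext i j
  fin_cases i <;> fin_cases j <;> simp [amatBlocks]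

theorem amatBlocks_algebraMap [Algebra S T] [Algebra S A] [Algebra T A] [IsScalarTower S T A]
    (L R : A) (τ κ₁ κ₂ p : S) :
    amatBlocks L R (algebraMap S T τ) (algebraMap S T κ₁) (algebraMap S T κ₂) (algebraMap S T p) =
      amatBlocks L R τ κ₁ κ₂ p := by
  simp only [amatBlocks, neg_smul, sub_smul, one_smul, algebraMap_smul]

theorem one_add_mul_diagonal_eq_amatBlocks [Algebra S A] (L R : A) (τ κ₁ κ₂ p : S) :
    1 + (amatBlocks 1 R τ κ₁ κ₂ p - 1) * diagonal ![L, 1, 1] = amatBlocks L R τ κ₁ κ₂ p := by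
  ext i j
  fin_cases i <;> fin_cases j <;> simp [amatBlocks]

theorem one_add_diagonal_mul_eq_amatBlocks [Algebra S A] (L R : A) (τ κ₁ κ₂ p : S) :
    1 + diagonal ![L, 1, 1] * (amatBlocks 1 R τ κ₁ κ₂ p - 1) =
      amatBlocks 1 (L * R) τ κ₁ κ₂ p := by
  ext i j
  fin_cases i <;> fin_cases j <;> simp [amatBlocks]

theorem det_smul_one_sub_amatBlocks_one_X (τ κ₁ κ₂ p x : S) :
    (x • 1 - amatBlocks 1 X τ κ₁ κ₂ p : Matrix (Fin 3) (Fin 3) S[X]).det =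
      ((x - 1) ^ 2 * (x - 1 + p)) • 1 + (((x - 1) * κ₁ + p * (κ₁ - κ₂)) * τ) • X := by
  have pencil : (x • 1 - amatBlocks 1 X τ κ₁ κ₂ p : Matrix (Fin 3) (Fin 3) S[X]) =
      !![C (x - 1), -(C τ * X), 0;
        C κ₁, C (x - 1), C κ₂;
        C p, 0, C (x - 1 + p)] := by
    ext1 i j
    fin_cases i <;> fin_cases j <;> simp [amatBlocks, smul_eq_C_mul, sub_add]
  rw [pencil, det_fin_three]
  simp only [of_apply, cons_val, smul_eq_C_mul, map_add, map_sub, map_mul, map_pow]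
  ring

end Blocks

section Determinant

variable {n S : Type*} [Fintype n] [DecidableEq n] [CommRing S]

theorem det_smul_one_sub_comp_amatBlocks_eq_one_mul (L R : Matrix n n S) (τ κ₁ κ₂ p x : S) :
    (x • 1 - comp (Fin 3) (Fin 3) n n S (amatBlocks L R τ κ₁ κ₂ p)).det =
      (x • 1 - comp (Fin 3) (Fin 3) n n S (amatBlocks 1 (L * R) τ κ₁ κ₂ p)).det := by
  rw [← one_add_mul_diagonal_eq_amatBlocks, det_smul_one_sub_comp_one_add_mul_comm,
    one_add_diagonal_mul_eq_amatBlocks]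

theorem det_smul_one_sub_comp_amatBlocks_one (M : Matrix n n S) (τ κ₁ κ₂ p x : S) :
    (x • 1 - comp (Fin 3) (Fin 3) n n S (amatBlocks 1 M τ κ₁ κ₂ p)).det =
      (((x - 1) ^ 2 * (x - 1 + p)) • 1 + (((x - 1) * κ₁ + p * (κ₁ - κ₂)) * τ) • M).det := by
  have blocks : (amatBlocks 1 X τ κ₁ κ₂ p).map (aeval M : S[X] →ₐ[S] Matrix n n S) =
        amatBlocks 1 M τ κ₁ κ₂ p := by
    rw [map_amatBlocks, map_one, aeval_X]
  rw [← blocks, det_smul_one_sub_comp_map_aeval, det_smul_one_sub_amatBlocks_one_X, map_add,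
    map_smul, map_smul, map_one, aeval_X]

theorem stmt0_general (L R : Matrix n n S) (τ κ₁ κ₂ p lam : S) :
    (lam • 1 - comp (Fin 3) (Fin 3) n n S (amatBlocks L R τ κ₁ κ₂ p)).det =
      (((lam - 1) ^ 2 * (lam - 1 + p)) • 1
        + (((lam - 1) * κ₁ + p * (κ₁ - κ₂)) * τ) • (L * R)).det := by
  rw [det_smul_one_sub_comp_amatBlocks_eq_one_mul, det_smul_one_sub_comp_amatBlocks_one]

end Determinant

theorem map_ofReal_Amat (n : ℕ) (L R : Matrix (Fin n) (Fin n) ℝ) (τ κ₁ κ₂ p : ℝ) :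
    (Amat n L R τ κ₁ κ₂ p).map ((↑) : ℝ → ℂ) =
      comp _ _ _ _ _ (amatBlocks (L.map (↑)) (R.map (↑)) (τ : ℂ) κ₁ κ₂ p) :=
  calc (Amat n L R τ κ₁ κ₂ p).map ((↑) : ℝ → ℂ)
      = comp _ _ _ _ _ ((amatBlocks L R τ κ₁ κ₂ p).map Complex.ofRealAm.mapMatrix) := rfl
    _ = comp _ _ _ _ _ (amatBlocks (L.map (↑)) (R.map (↑)) (τ : ℂ) κ₁ κ₂ p) := by
      rw [map_amatBlocks, ← amatBlocks_algebraMap (T := ℂ)]; rfl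

theorem stmt0 (n : ℕ) (hn : 1 ≤ n) (L R : Matrix (Fin n) (Fin n) ℝ)
    (hRdiag : ∀ i j, i ≠ j → R i j = 0) (hRpos : ∀ i, 0 < R i i)
    (τ κ₁ κ₂ p : ℝ) (lam : ℂ) :
    (lam • (1 : Matrix (Fin 3 × Fin n) (Fin 3 × Fin n) ℂ)
        - (Amat n L R τ κ₁ κ₂ p).map ((↑) : ℝ → ℂ)).det
      = (((lam - 1) ^ 2 * (lam - 1 + (p : ℂ))) • (1 : Matrix (Fin n) (Fin n) ℂ)
          + (((lam - 1) * (κ₁ : ℂ) + (p : ℂ) * ((κ₁ : ℂ) - (κ₂ : ℂ))) * (τ : ℂ))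
              • ((L * R).map ((↑) : ℝ → ℂ))).det := by
  have map_mul : (L * R).map ((↑) : ℝ → ℂ) = L.map (↑) * R.map (↑) :=
    Matrix.map_mul (f := Complex.ofRealHom)
  rw [map_ofReal_Amat, stmt0_general, map_mul]
end

section
/- If ν_1, …, ν_n ∈ ℂ are the eigenvalues of τ·L·R listed with algebraic multiplicity (i.e. the characteristic polynomial of τLR over ℂ equals ∏_{l=1}^n (X − ν_l)), then the characteristic polynomial of A over ℂ equals ∏_{l=1}^n g_{ν_l}(X), where g_ν(λ) = (λ−1)²(λ−1+p) + ((λ−1)κ₁ + p(κ₁−κ₂))ν. -/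
open Matrix Polynomial

/-- The cubic polynomial g_ν(λ) = (λ−1)²(λ−1+p) + ((λ−1)κ₁ + p(κ₁−κ₂))ν over ℂ. -/
noncomputable def gPoly (κ₁ κ₂ p : ℝ) (ν : ℂ) : Polynomial ℂ :=
  (X - 1) ^ 2 * (X - 1 + C (p : ℂ))
    + ((X - 1) * C (κ₁ : ℂ) + C ((p : ℂ) * ((κ₁ : ℂ) - (κ₂ : ℂ)))) * C ν

/-!
The characteristic matrix has the block form `[[x, S, 0], [a L, y, b], [c L, 0, z]]` with scalars
`x, y, z, a, b, c`. Scalar blocks commute with every block, so right multiplication by a block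
lower triangular matrix clears its first block column without any division. Cancelling the
determinant of that multiplier, which is a monic polynomial, leaves a single determinant
`det (x y z - (a z - b c) S L)`. This factors through the eigenvalues of `S L`, because scaling a
matrix scales the roots of its characteristic polynomial, over any commutative ring.
-/

section EigenvalueProducts

variable {K ι κ : Type*} [CommRing K]

theorem prod_X_sub_C_scaleRoots (s : Finset κ) (ν : κ → K) (c : K) :
    (∏ l ∈ s, (X - C (ν l))).scaleRoots c = ∏ l ∈ s, (X - C (ν l * c)) := by
  nontriviality K
  classical
  induction s using Finset.induction_on with
  | empty => simp
  | insert l s hl ih =>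
    rw [Finset.prod_insert hl, Finset.prod_insert hl, mul_scaleRoots', X_sub_C_scaleRoots, ih]
    rw [(monic_X_sub_C _).leadingCoeff, (monic_prod_X_sub_C ν s).leadingCoeff, one_mul]
    exact one_ne_zero

variable [Fintype ι] [DecidableEq ι]

theorem charpoly_smul_eq_scaleRoots (c : K) (M : Matrix ι ι K) :
    (c • M).charpoly = M.charpoly.scaleRoots c := by
  nontriviality K
  ext i
  rw [coeff_scaleRoots, charpoly_natDegree_eq_dim]
  rcases lt_or_ge (Fintype.card ι) i with hi | hi
  · have coeff_eq_zero (N : Matrix ι ι K) : N.charpoly.coeff i = 0 :=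
      coeff_eq_zero_of_natDegree_lt (by rwa [charpoly_natDegree_eq_dim])
    rw [coeff_eq_zero, coeff_eq_zero, zero_mul]
  · obtain ⟨k, hk, rfl⟩ : ∃ k ≤ Fintype.card ι, i = Fintype.card ι - k :=
      ⟨Fintype.card ι - i, by lia, by lia⟩
    rw [charpoly_coeff_eq_sum_minors _ _ hk, charpoly_coeff_eq_sum_minors _ _ hk,
      Nat.sub_sub_self hk, mul_assoc, Finset.sum_mul]
    congr 1
    refine Finset.sum_congr rfl fun s hs ↦ ?_
    change (c • M.submatrix Subtype.val Subtype.val).det = _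
    rw [det_smul, Fintype.card_coe, (Finset.mem_powersetCard.mp hs).2, mul_comm]

theorem det_smul_one_sub_smul_of_charpoly_eq_prod [Fintype κ] {N : Matrix ι ι K} {ν : κ → K}
    (hν : N.charpoly = ∏ l, (X - C (ν l))) (a b : K) :
    (a • (1 : Matrix ι ι K) - b • N).det = ∏ l, (a - b * ν l) := by
  rw [smul_one_eq_diagonal, ← scalar_apply, ← eval_charpoly, charpoly_smul_eq_scaleRoots, hν,
    prod_X_sub_C_scaleRoots, eval_prod]
  simp only [eval_sub, eval_X, eval_C, mul_comm]

end EigenvalueProducts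

section BlockMatrices

variable {K m ι : Type*} [CommRing K] [Fintype m] [Fintype ι] [DecidableEq ι]

theorem charmatrix_comp [DecidableEq m] (B : Matrix m m (Matrix ι ι K)) :
    (comp _ _ _ _ K B).charmatrix =
      comp _ _ _ _ K[X]
        (diagonal (fun _ ↦ (X : K[X]) • (1 : Matrix ι ι K[X])) - B.map (·.map C)) := by
  rw [charmatrix, scalar_apply]
  simp only [smul_one_eq_diagonal]
  rw [← comp_diagonal_diagonal fun _ _ ↦ (X : K[X])]
  rfl

variable [LinearOrder m] {M : Matrix m m (Matrix ι ι K)}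

theorem det_comp_of_isUpperTriangular (hM : M.IsUpperTriangular) :
    (comp m m ι ι K M).det = ∏ i, (M i i).det := by
  rw [hM.comp.det_fintype]
  refine Finset.prod_congr rfl fun i _ ↦ ?_
  let fiber : ι ≃ {a : m × ι // id a.1 = i} :=
    { toFun := fun j ↦ ⟨(i, j), rfl⟩
      invFun := fun a ↦ a.1.2
      left_inv := fun _ ↦ rfl
      right_inv := by rintro ⟨⟨_, _⟩, rfl⟩; rfl }
  exact (det_submatrix_equiv_self fiber _).symm

theorem det_comp_of_isLowerTriangular (hM : M.IsLowerTriangular) :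
    (comp m m ι ι K M).det = ∏ i, (M i i).det := by
  have hMt : (Mᵀ.map (·ᵀ)).IsUpperTriangular := fun i j hij ↦ by
    simp [hM (show OrderDual.toDual i < OrderDual.toDual j from hij)]
  rw [← det_transpose, transpose_comp, det_comp_of_isUpperTriangular hMt]
  simp only [map_apply, transpose_apply, det_transpose]

end BlockMatrices

section ThreeBlock

variable {K ι κ : Type*} [CommRing K] [DecidableEq ι]

/-- The 3 × 3 block shape `[[x, S, 0], [a L, y, b], [c L, 0, z]]` shared by the matrix `A` and its
characteristic matrix, as a matrix of blocks; scalar entries stand for multiples of the identity.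
`Matrix.comp` flattens it to a matrix indexed by `Fin 3 × ι`. -/
def threeBlock (L S : Matrix ι ι K) (x y z a b c : K) : Matrix (Fin 3) (Fin 3) (Matrix ι ι K) :=
  !![x • 1, S, 0; a • L, y • 1, b • 1; c • L, 0, z • 1]

/-- The block column operation that, multiplied on the right, clears the first block column of
`threeBlock L S x y z a b c` below the diagonal. The factor `y z` on that column avoids dividing by
the pivots `y` and `z`. -/
def threeBlockElim (L : Matrix ι ι K) (y z a b c : K) : Matrix (Fin 3) (Fin 3) (Matrix ι ι K) :=
  !![(y * z) • 1, 0, 0; -(a * z - b * c) • L, 1, 0; -(y * c) • L, 0, 1]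

theorem threeBlock_map {K' : Type*} [CommRing K'] (f : K →+* K') (L S : Matrix ι ι K)
    (x y z a b c : K) :
    (threeBlock L S x y z a b c).map (·.map f) =
      threeBlock (L.map f) (S.map f) (f x) (f y) (f z) (f a) (f b) (f c) := by
  have map_smul_block (t : K) (N : Matrix ι ι K) : (t • N).map f = f t • N.map f :=
    Matrix.map_smul' f t N (map_mul f)
  have map_one_block : (1 : Matrix ι ι K).map f = 1 := Matrix.map_one f (map_zero f) (map_one f)
  have map_zero_block : (0 : Matrix ι ι K).map f = 0 := Matrix.map_zero f (map_zero f)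
  rw [eta_fin_three (Matrix.map _ _)]
  simp only [threeBlock, map_apply, of_apply, cons_val, map_smul_block, map_one_block,
    map_zero_block]

theorem isLowerTriangular_threeBlockElim (L : Matrix ι ι K) (y z a b c : K) :
    (threeBlockElim L y z a b c).IsLowerTriangular := by
  intro i j hij
  rw [OrderDual.toDual_lt_toDual] at hij
  fin_cases i <;> fin_cases j <;> first | rfl | exact absurd hij (by decide)

variable [Fintype ι]

theorem threeBlock_mul_threeBlockElim (L S : Matrix ι ι K) (x y z a b c : K) :
    threeBlock L S x y z a b c * threeBlockElim L y z a b c =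
      !![(x * y * z) • 1 - (a * z - b * c) • (S * L), S, 0; 0, y • 1, b • 1; 0, 0, z • 1] := by
  have first_entry : (y * z) • x • (1 : Matrix ι ι K) + -(a * z - b * c) • (S * L) =
      (x * y * z) • 1 - (a * z - b * c) • (S * L) := by module
  have second_entry : (y * z) • a • L + (-(a * z - b * c) • y • L + -(y * c) • b • L) = 0 := by
    module
  have third_entry : (y * z) • c • L + -(y * c) • z • L = 0 := by module
  simp only [threeBlock, threeBlockElim, mul_fin_three, mul_smul_comm, smul_mul_assoc, one_mul,
    mul_one, mul_zero, zero_mul, smul_zero, add_zero, zero_add, add_assoc, first_entry,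
    second_entry, third_entry]

theorem det_comp_threeBlockElim (L : Matrix ι ι K) (y z a b c : K) :
    (comp _ _ _ _ K (threeBlockElim L y z a b c)).det = (y * z) ^ Fintype.card ι := by
  rw [det_comp_of_isLowerTriangular (isLowerTriangular_threeBlockElim L y z a b c)]
  simp [Fin.prod_univ_three, threeBlockElim]

theorem isUpperTriangular_threeBlock_mul_threeBlockElim (L S : Matrix ι ι K) (x y z a b c : K) :
    (threeBlock L S x y z a b c * threeBlockElim L y z a b c).IsUpperTriangular := by
  rw [threeBlock_mul_threeBlockElim]
  intro i j hij
  fin_cases i <;> fin_cases j <;> first | rfl | exact absurd hij (by decide)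

theorem det_comp_threeBlock (L S : Matrix ι ι K) {y z : K} (hy : IsRegular y) (hz : IsRegular z)
    (x a b c : K) :
    (comp _ _ _ _ K (threeBlock L S x y z a b c)).det =
      ((x * y * z) • (1 : Matrix ι ι K) - (a * z - b * c) • (S * L)).det := by
  set B := threeBlock L S x y z a b c
  set E := threeBlockElim L y z a b c
  refine ((hy.mul hz).pow (Fintype.card ι)).right.eq_iff.mp ?_
  calc (comp _ _ _ _ K B).det * (y * z) ^ Fintype.card ι
      = (comp _ _ _ _ K B).det * (comp _ _ _ _ K E).det := by rw [det_comp_threeBlockElim]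
    _ = (comp _ _ _ _ K (B * E)).det := by
        rw [← det_mul]
        exact congrArg det (map_mul (compRingEquiv (Fin 3) ι K) B E).symm
    _ = ∏ i, ((B * E) i i).det :=
        det_comp_of_isUpperTriangular (isUpperTriangular_threeBlock_mul_threeBlockElim ..)
    _ = ((x * y * z) • (1 : Matrix ι ι K) - (a * z - b * c) • (S * L)).det
          * (y * z) ^ Fintype.card ι := by
        rw [threeBlock_mul_threeBlockElim]
        simp [Fin.prod_univ_three, mul_pow, mul_assoc]

theorem charmatrix_comp_threeBlock (L S : Matrix ι ι K) (x y z a b c : K) :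
    (comp _ _ _ _ K (threeBlock L S x y z a b c)).charmatrix =
      comp _ _ _ _ K[X] (threeBlock (L.map C) (-S.map C) (X - C x) (X - C y) (X - C z)
        (-C a) (-C b) (-C c)) := by
  rw [charmatrix_comp, threeBlock_map, eta_fin_three (_ - _)]
  simp [threeBlock, sub_smul]

theorem charpoly_comp_threeBlock (L S : Matrix ι ι K) (x y z a b c : K) :
    (comp _ _ _ _ K (threeBlock L S x y z a b c)).charpoly =
      (((X - C x) * (X - C y) * (X - C z)) • (1 : Matrix ι ι K[X])
        - (C a * (X - C z) + C (b * c)) • (S * L).map C).det := by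
  rw [charpoly, charmatrix_comp_threeBlock, det_comp_threeBlock _ _
    (monic_X_sub_C y).isRegular (monic_X_sub_C z).isRegular, Matrix.map_mul]
  congr 2
  rw [Matrix.neg_mul, smul_neg, ← neg_smul, C_mul]
  congr 1
  ring

theorem stmt1_general [Fintype κ] (L S : Matrix ι ι K) (x y z a b c : K) (ν : κ → K)
    (hν : (L * S).charpoly = ∏ l, (X - C (ν l))) :
    (comp _ _ _ _ K (threeBlock L S x y z a b c)).charpoly =
      ∏ l, ((X - C x) * (X - C y) * (X - C z) - (C a * (X - C z) + C (b * c)) * C (ν l)) := by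
  rw [charpoly_comp_threeBlock]
  refine det_smul_one_sub_smul_of_charpoly_eq_prod ?_ _ _
  rw [charpoly_map, charpoly_mul_comm, hν, Polynomial.map_prod]
  simp only [Polynomial.map_sub, map_X, map_C]

end ThreeBlock

theorem Amat_eq_comp (n : ℕ) (L R : Matrix (Fin n) (Fin n) ℝ) (τ κ₁ κ₂ p : ℝ) :
    Amat n L R τ κ₁ κ₂ p =
      comp _ _ _ _ ℝ (threeBlock L (τ • R) 1 1 (1 - p) (-κ₁) (-κ₂) (-p)) := by
  simp only [threeBlock, one_smul]
  rfl

theorem Amat_map_ofReal (n : ℕ) (L R : Matrix (Fin n) (Fin n) ℝ) (τ κ₁ κ₂ p : ℝ) :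
    (Amat n L R τ κ₁ κ₂ p).map ((↑) : ℝ → ℂ) =
      comp _ _ _ _ ℂ (threeBlock (L.map (↑)) ((τ • R).map (↑)) 1 1 (1 - p) (-κ₁) (-κ₂) (-p)) := by
  have map_blocks := threeBlock_map Complex.ofRealHom L (τ • R) 1 1 (1 - p) (-κ₁) (-κ₂) (-p)
  simp only [map_one, map_sub, map_neg] at map_blocks
  rw [Amat_eq_comp, ← comp_map_map]
  exact congrArg (comp _ _ _ _ ℂ) map_blocks

theorem gPoly_eq_sub (κ₁ κ₂ p : ℝ) (ν : ℂ) :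
    gPoly κ₁ κ₂ p ν = (X - C 1) * (X - C 1) * (X - C (1 - (p : ℂ)))
      - (C (-(κ₁ : ℂ)) * (X - C (1 - (p : ℂ))) + C (-(κ₂ : ℂ) * -(p : ℂ))) * C ν := by
  simp only [gPoly, map_sub, map_neg, map_mul, map_one]
  ring

theorem map_ofReal_mul_smul {ι : Type*} [Fintype ι] (L R : Matrix ι ι ℝ) (τ : ℝ) :
    (τ • (L * R)).map ((↑) : ℝ → ℂ) = L.map (↑) * (τ • R).map (↑) := by
  rw [← Matrix.mul_smul]
  exact Matrix.map_mul (f := Complex.ofRealHom)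

theorem stmt1 (n : ℕ) (hn : 1 ≤ n) (L R : Matrix (Fin n) (Fin n) ℝ)
    (hRdiag : ∀ i j, i ≠ j → R i j = 0) (hRpos : ∀ i, 0 < R i i)
    (τ κ₁ κ₂ p : ℝ) (ν : Fin n → ℂ)
    (hν : ((τ • (L * R)).map ((↑) : ℝ → ℂ)).charpoly = ∏ l, (X - C (ν l))) :
    ((Amat n L R τ κ₁ κ₂ p).map ((↑) : ℝ → ℂ)).charpoly
      = ∏ l, gPoly κ₁ κ₂ p (ν l) := by
  simp only [Amat_map_ofReal, gPoly_eq_sub]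
  exact stmt1_general _ _ _ _ _ _ _ _ ν (map_ofReal_mul_smul L R τ ▸ hν)
end

section
/- Assume p ≠ 0, τ ≠ 0 and κ₁ ≠ κ₂. Then the algebraic multiplicity of 1 as a root of the characteristic polynomial of A (over ℂ) equals twice the algebraic multiplicity of 0 as an eigenvalue of L·R. In particular, λ = 1 is an eigenvalue of A of algebraic multiplicity exactly 2 if and only if 0 is a simple eigenvalue of L·R. -/
open Matrix Polynomial

/-! Shifting the eigenvalue `1` to `0` and eliminating the last two block rows turns the
characteristic polynomial of `A` into `det (X²(X + p) + τ(κ₁X + p(κ₁ - κ₂)) R L)`. A determinant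
`det (a - b N)` is the characteristic polynomial of `N` homogenized and evaluated at `(a, b)`.
Splitting off the factor `X ^ m`, with `m` the multiplicity of `0`, leaves `a ^ m` times a value
of the homogenization that is nonzero wherever `a` vanishes and `b` does not. At `X = 0` the
coefficient `a` has a double zero and `b` equals `-τp(κ₁ - κ₂) ≠ 0`, whence multiplicity `2m`. -/

section Polynomial

variable {K : Type*} [CommRing K]

theorem eval_eval_scaleRoots_map_C (q a b : K[X]) (c : K) :
    (((q.map C).scaleRoots b : K[X][X]).eval a).eval c =
      (q.scaleRoots (b.eval c)).eval (a.eval c) := by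
  rcases eq_or_ne q 0 with rfl | hq
  · simp
  have hlead : evalRingHom c (q.map C).leadingCoeff ≠ 0 := by
    simpa [leadingCoeff_map_of_injective C_injective] using hq
  have hcomp : (evalRingHom c).comp C = RingHom.id K := by ext; simp
  rw [← coe_evalRingHom c, ← eval_map_apply, map_scaleRoots _ _ _ hlead, Polynomial.map_map, hcomp,
    Polynomial.map_id, coe_evalRingHom]

theorem rootMultiplicity_zero_X_sq_mul_X_add_C {p : K} (hp : p ≠ 0) :
    (X ^ 2 * (X + C p)).rootMultiplicity 0 = 2 := by
  have := nontrivial_of_ne p 0 hp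
  have hroot : ¬ (X + C p).IsRoot 0 := by simpa using hp
  have h := rootMultiplicity_mul_X_sub_C_pow (a := 0) (n := 2) (X_add_C_ne_zero p)
  rwa [C_0, sub_zero, mul_comm, rootMultiplicity_eq_zero hroot, zero_add] at h

variable [IsDomain K]

theorem rootMultiplicity_pow (q : K[X]) (n : ℕ) (c : K) :
    (q ^ n).rootMultiplicity c = n * q.rootMultiplicity c := by
  classical
  rw [← count_roots, roots_pow, Multiset.count_nsmul, count_roots]

theorem rootMultiplicity_eval_scaleRoots_map_C {q a b : K[X]} {c : K} (hq : q ≠ 0) (ha : a ≠ 0)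
    (hac : a.IsRoot c) (hbc : ¬ b.IsRoot c) :
    (((q.map C).scaleRoots b : K[X][X]).eval a).rootMultiplicity c =
      q.rootMultiplicity 0 * a.rootMultiplicity c := by
  obtain ⟨r, hqr, hXr⟩ := exists_eq_pow_rootMultiplicity_mul_and_not_dvd q hq 0
  rw [C_0, sub_zero] at hqr hXr
  set m := q.rootMultiplicity 0
  set e := ((r.map C).scaleRoots b : K[X][X]).eval a
  have he : ¬ e.IsRoot c := by
    have hr0 : r.coeff 0 ≠ 0 := mt X_dvd_iff.mpr hXr
    rw [IsRoot.def, eval_eval_scaleRoots_map_C, hac.eq_zero, ← coeff_zero_eq_eval_zero,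
      coeff_scaleRoots]
    exact mul_ne_zero hr0 (pow_ne_zero _ hbc)
  have hX : (X : K[X][X]).scaleRoots b = X := by simpa using X_add_C_scaleRoots (0 : K[X]) b
  have hfactor : ((q.map C).scaleRoots b : K[X][X]).eval a = a ^ m * e := by
    rw [hqr, Polynomial.map_mul, Polynomial.map_pow, map_X, mul_scaleRoots_of_noZeroDivisors,
      pow_scaleRoots_of_isReduced, hX, eval_mul, eval_pow, eval_X]
  have he0 : e ≠ 0 := fun h => he (h ▸ eval_zero)
  rw [hfactor, rootMultiplicity_mul (mul_ne_zero (pow_ne_zero m ha) he0), rootMultiplicity_pow,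
    rootMultiplicity_eq_zero he, add_zero]

end Polynomial

section Determinant

variable {ι κ S : Type*} [Fintype ι] [DecidableEq ι] [Fintype κ] [DecidableEq κ] [CommRing S]

theorem charpoly_smul_eq_scaleRoots_s2 (b : S) (N : Matrix ι ι S) :
    (b • N).charpoly = N.charpoly.scaleRoots b := by
  nontriviality S
  ext i
  rw [coeff_scaleRoots, charpoly_natDegree_eq_dim]
  rcases le_or_gt i (Fintype.card ι) with hi | hi
  · obtain ⟨k, hk, rfl⟩ : ∃ k ≤ Fintype.card ι, i = Fintype.card ι - k :=
      ⟨Fintype.card ι - i, Nat.sub_le _ _, (Nat.sub_sub_self hi).symm⟩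
    rw [Nat.sub_sub_self hk, charpoly_coeff_eq_sum_minors _ k hk,
      charpoly_coeff_eq_sum_minors _ k hk, mul_assoc, Finset.sum_mul]
    congr 1
    refine Finset.sum_congr rfl fun s hs => ?_
    rw [submatrix_smul, Pi.smul_apply, Pi.smul_apply, det_smul, Fintype.card_coe,
      (Finset.mem_powersetCard.mp hs).2, mul_comm]
  · rw [coeff_eq_zero_of_natDegree_lt (by rwa [charpoly_natDegree_eq_dim]),
      coeff_eq_zero_of_natDegree_lt (by rwa [charpoly_natDegree_eq_dim]), zero_mul]

theorem det_smul_one_sub_smul (a b : S) (N : Matrix ι ι S) :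
    (a • (1 : Matrix ι ι S) - b • N).det = (N.charpoly.scaleRoots b).eval a := by
  rw [← charpoly_smul_eq_scaleRoots_s2, eval_charpoly, scalar_apply, smul_one_eq_diagonal]

theorem rootMultiplicity_det_smul_one_sub_smul_map_C [IsDomain S] {a b : S[X]} {c : S}
    (N : Matrix ι ι S) (ha : a ≠ 0) (hac : a.IsRoot c) (hbc : ¬ b.IsRoot c) :
    (a • (1 : Matrix ι ι S[X]) - b • N.map C).det.rootMultiplicity c =
      N.charpoly.rootMultiplicity 0 * a.rootMultiplicity c := by
  rw [det_smul_one_sub_smul, charpoly_map,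
    rootMultiplicity_eval_scaleRoots_map_C N.charpoly_monic.ne_zero ha hac hbc]

-- A Schur complement formula without division: `D'` plays the role of `d • D⁻¹`.
theorem det_fromBlocks_mul_pow_card (A : Matrix ι ι S) (B : Matrix ι κ S) (C : Matrix κ ι S)
    {D D' : Matrix κ κ S} {d : S} (hD : D * D' = d • 1) :
    (fromBlocks A B C D).det * d ^ Fintype.card ι = (d • A - B * D' * C).det * D.det := by
  have helim : fromBlocks A B C D * fromBlocks (d • 1) 0 (-(D' * C)) 1 =
      fromBlocks (d • A - B * D' * C) B 0 D := by
    simp [fromBlocks_multiply, ← Matrix.mul_assoc, hD, sub_eq_add_neg]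
  have hdet := congrArg det helim
  rwa [det_mul, det_fromBlocks_zero₁₂, det_fromBlocks_zero₂₁, det_smul, det_one, det_one, mul_one,
    mul_one] at hdet

theorem det_fromBlocks_fromCols_fromRows {s q : S} (k : S) (B C₁ C₂ : Matrix ι ι S)
    (hsq : IsRegular (s * q)) :
    (fromBlocks (s • 1) (fromCols B 0) (fromRows C₁ C₂)
        (fromBlocks (s • 1) (k • 1) 0 (q • 1))).det =
      ((s ^ 2 * q) • (1 : Matrix ι ι S) - B * (q • C₁ - k • C₂)).det := by
  set D : Matrix (ι ⊕ ι) (ι ⊕ ι) S := fromBlocks (s • 1) (k • 1) 0 (q • 1)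
  let D' : Matrix (ι ⊕ ι) (ι ⊕ ι) S := fromBlocks (q • 1) (-(k • 1)) 0 (s • 1)
  have hDD' : D * D' = (s * q) • 1 := by
    simp [D, D', fromBlocks_multiply, smul_smul, mul_comm, ← fromBlocks_one, fromBlocks_smul]
  have hD : D.det = (s * q) ^ Fintype.card ι := by
    simp [D, det_fromBlocks_zero₂₁, mul_pow]
  have hSchur : (s * q) • (s • 1) - fromCols B (0 : Matrix ι ι S) * D' * fromRows C₁ C₂ =
      (s ^ 2 * q) • 1 - B * (q • C₁ - k • C₂) := by
    have hscalar : s * q * s = s ^ 2 * q := by ring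
    rw [smul_smul, hscalar, Matrix.mul_assoc, fromBlocks_mul_fromRows, fromCols_mul_fromRows]
    simp [sub_eq_add_neg]
  apply (hsq.pow (Fintype.card ι)).right
  simpa only [hD, hSchur] using
    det_fromBlocks_mul_pow_card (s • 1) (fromCols B 0) (fromRows C₁ C₂) hDD'

end Determinant

section StepMatrix

variable {ι K : Type*} [DecidableEq ι] [CommRing K]

/-- The matrix `A` of `Amat` over an arbitrary commutative ring and index type, with its blocks
grouped as first against last two, so that the last two can be eliminated together. -/
def stepMatrix (L R : Matrix ι ι K) (τ κ₁ κ₂ p : K) : Matrix (ι ⊕ ι ⊕ ι) (ι ⊕ ι ⊕ ι) K :=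
  fromBlocks 1 (fromCols (τ • R) 0) (fromRows ((-κ₁) • L) ((-p) • L))
    (fromBlocks 1 ((-κ₂) • 1) 0 ((1 - p) • 1))

/-- The identification of the indices of `Amat` with those of `stepMatrix`. -/
def finThreeProdEquiv (ι : Type*) : Fin 3 × ι ≃ ι ⊕ ι ⊕ ι where
  toFun a := ![Sum.inl a.2, Sum.inr (Sum.inl a.2), Sum.inr (Sum.inr a.2)] a.1
  invFun := Sum.elim (Prod.mk 0) (Sum.elim (Prod.mk 1) (Prod.mk 2))
  left_inv := by rintro ⟨a, i⟩; fin_cases a <;> rfl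
  right_inv := by rintro (i | i | i) <;> rfl

theorem reindex_Amat (n : ℕ) (L R : Matrix (Fin n) (Fin n) ℝ) (τ κ₁ κ₂ p : ℝ) :
    reindex (finThreeProdEquiv _) (finThreeProdEquiv _) (Amat n L R τ κ₁ κ₂ p) =
      stepMatrix L R τ κ₁ κ₂ p := by
  ext (i | i | i) (j | j | j) <;> rfl

theorem stepMatrix_map {K' : Type*} [CommRing K'] (f : K →+* K') (L R : Matrix ι ι K)
    (τ κ₁ κ₂ p : K) :
    (stepMatrix L R τ κ₁ κ₂ p).map f =
      stepMatrix (L.map f) (R.map f) (f τ) (f κ₁) (f κ₂) (f p) := by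
  ext (i | i | i) (j | j | j) <;> simp [stepMatrix, one_apply, apply_ite f]

variable [Fintype ι]

theorem charpoly_Amat_map (f : ℝ →+* K) (n : ℕ) (L R : Matrix (Fin n) (Fin n) ℝ)
    (τ κ₁ κ₂ p : ℝ) :
    ((Amat n L R τ κ₁ κ₂ p).map f).charpoly =
      (stepMatrix (L.map f) (R.map f) (f τ) (f κ₁) (f κ₂) (f p)).charpoly := by
  rw [← stepMatrix_map, ← reindex_Amat, charpoly_map, charpoly_map, charpoly_reindex]

theorem charmatrix_stepMatrix_sub_one (L R : Matrix ι ι K) (τ κ₁ κ₂ p : K) :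
    charmatrix (stepMatrix L R τ κ₁ κ₂ p - scalar _ 1) =
      fromBlocks ((X : K[X]) • 1) (fromCols (-(C τ • R.map C)) 0)
        (fromRows (C κ₁ • L.map C) (C p • L.map C))
        (fromBlocks ((X : K[X]) • 1) (C κ₂ • 1) 0 ((X + C p) • 1)) := by
  ext1 i j
  rcases i with i | i | i <;> rcases j with j | j | j <;>
    simp [stepMatrix, charmatrix, diagonal_apply, one_apply] <;>
    split_ifs <;> simp

theorem charpoly_stepMatrix_comp_X_add_C_one (L R : Matrix ι ι K) (τ κ₁ κ₂ p : K) :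
    (stepMatrix L R τ κ₁ κ₂ p).charpoly.comp (X + C 1) =
      ((X ^ 2 * (X + C p)) • (1 : Matrix ι ι K[X]) -
        (-(C τ * (C κ₁ * X + C (p * (κ₁ - κ₂))))) • (R * L).map C).det := by
  have hregular : IsRegular (X * (X + C p)) := (monic_X.mul (monic_X_add_C p)).isRegular
  rw [← charpoly_sub_scalar, charpoly, charmatrix_stepMatrix_sub_one,
    det_fromBlocks_fromCols_fromRows _ _ _ _ hregular]
  congr 2
  rw [Matrix.map_mul, smul_smul, smul_smul, ← sub_smul, Matrix.mul_smul, Matrix.neg_mul,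
    Matrix.smul_mul, smul_neg, neg_smul, smul_smul]
  congr 2
  simp only [C_mul, C_sub]
  ring

theorem stmt2_general [IsDomain K] (L R : Matrix ι ι K) (τ κ₁ κ₂ p : K) (hp : p ≠ 0)
    (hτ : τ ≠ 0) (hκ : κ₁ ≠ κ₂) :
    (stepMatrix L R τ κ₁ κ₂ p).charpoly.rootMultiplicity 1
        = 2 * (L * R).charpoly.rootMultiplicity 0
    ∧ ((stepMatrix L R τ κ₁ κ₂ p).charpoly.rootMultiplicity 1 = 2
        ↔ (L * R).charpoly.rootMultiplicity 0 = 1) := by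
  have hcubic : (X ^ 2 * (X + C p)) ≠ 0 :=
    mul_ne_zero (pow_ne_zero 2 X_ne_zero) (X_add_C_ne_zero p)
  have hcoeff : ¬ (-(C τ * (C κ₁ * X + C (p * (κ₁ - κ₂))))).IsRoot 0 := by
    simp [hτ, hp, sub_ne_zero.mpr hκ]
  have hmult : (stepMatrix L R τ κ₁ κ₂ p).charpoly.rootMultiplicity 1
      = 2 * (L * R).charpoly.rootMultiplicity 0 := by
    rw [rootMultiplicity_eq_rootMultiplicity, charpoly_stepMatrix_comp_X_add_C_one,
      rootMultiplicity_det_smul_one_sub_smul_map_C _ hcubic (by simp) hcoeff,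
      rootMultiplicity_zero_X_sq_mul_X_add_C hp, charpoly_mul_comm R L, mul_comm]
  exact ⟨hmult, by lia⟩

end StepMatrix

theorem stmt2 (n : ℕ) (hn : 1 ≤ n) (L R : Matrix (Fin n) (Fin n) ℝ)
    (hRdiag : ∀ i j, i ≠ j → R i j = 0) (hRpos : ∀ i, 0 < R i i)
    (τ κ₁ κ₂ p : ℝ) (hp : p ≠ 0) (hτ : τ ≠ 0) (hκ : κ₁ ≠ κ₂) :
    (((Amat n L R τ κ₁ κ₂ p).map ((↑) : ℝ → ℂ)).charpoly.rootMultiplicity 1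
        = 2 * ((L * R).map ((↑) : ℝ → ℂ)).charpoly.rootMultiplicity 0)
    ∧ ((((Amat n L R τ κ₁ κ₂ p).map ((↑) : ℝ → ℂ)).charpoly.rootMultiplicity 1 = 2
        ↔ ((L * R).map ((↑) : ℝ → ℂ)).charpoly.rootMultiplicity 0 = 1)) := by
  have hcoe : ((↑) : ℝ → ℂ) = Complex.ofRealHom := rfl
  rw [hcoe, charpoly_Amat_map, Matrix.map_mul]
  exact stmt2_general _ _ _ _ _ _ (by simpa using hp) (by simpa using hτ) (by simpa using hκ)
end

section
/- Assume ξᵀL = 0, τ ≠ 0 and p ≠ 0. Define the row vectors η₁ᵀ = γ·(ξᵀR⁻¹, −τξᵀ, τκ₂(1/p + 1/p²)ξᵀ), η₂ᵀ = γ·(0, τξᵀ, −(τκ₂/p)ξᵀ), and η₃ᵀ = γ·(0, 0, ξᵀ) in ℝ^{3n}. Then η₂ᵀA = η₂ᵀ, η₁ᵀA = η₁ᵀ + η₂ᵀ (so (η₂, η₁) is a left Jordan chain of A for the eigenvalue 1), and η₃ᵀA = (1−p)·η₃ᵀ. -/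
open Matrix

/-- The stacked (row) vector (u, v, w) ∈ ℝ^{3n}. -/
def vec3 {n : ℕ} (u v w : Fin n → ℝ) : Fin 3 × Fin n → ℝ :=
  fun a => ![u, v, w] a.1 a.2

/-!
If `ζR = ξ` and `ξL = 0`, the row vectors `(aζ, bξ, cξ)` form an invariant subspace on which the
block matrix acts, in the coordinates `(a, b, c)`, by right multiplication with the bidiagonal
matrix `[[1, τ, 0], [0, 1, −κ₂], [0, 0, 1 − p]]`. The Jordan chain and the eigenvector are
those of this `3 × 3` matrix, scaled by `γ`.
-/

theorem isUnit_iff_of_isDiag {ι K : Type*} [Fintype ι] [DecidableEq ι] [CommRing K]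
    {D : Matrix ι ι K} (hD : D.IsDiag) : IsUnit D ↔ ∀ i, IsUnit (D i i) := by
  conv_lhs => rw [← hD.diagonal_diag, isUnit_diagonal, Pi.isUnit_iff]
  rfl

theorem vecMul_inv_vecMul {ι K : Type*} [Fintype ι] [DecidableEq ι] [CommRing K]
    {M : Matrix ι ι K} (hM : IsUnit M) (v : ι → K) : v ᵥ* M⁻¹ ᵥ* M = v := by
  rw [vecMul_vecMul, nonsing_inv_mul M ((isUnit_iff_isUnit_det M).mp hM), vecMul_one]

theorem uncurry_vecMul_comp {I J ι κ S : Type*} [Fintype I] [Fintype ι]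
    [NonUnitalNonAssocSemiring S] (x : I → ι → S) (M : Matrix I J (Matrix ι κ S)) :
    Function.uncurry x ᵥ* comp I J ι κ S M = Function.uncurry fun j => ∑ i, x i ᵥ* M i j := by
  ext ⟨j, k⟩
  simp only [vecMul, dotProduct, Fintype.sum_prod_type, Function.uncurry_apply_pair, comp_apply,
    Finset.sum_apply]

/-- The stacked row vector `(u, v, w)` over an arbitrary coefficient and index type; `vec3` is
definitionally the case of real vectors indexed by `Fin n`. -/
def blockRow {ι K : Type*} (u v w : ι → K) : Fin 3 × ι → K :=
  Function.uncurry ![u, v, w]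

theorem blockRow_add {ι K : Type*} [Add K] (u v w u' v' w' : ι → K) :
    blockRow u v w + blockRow u' v' w' = blockRow (u + u') (v + v') (w + w') := by
  ext ⟨j, k⟩
  fin_cases j <;> rfl

theorem blockRow_smul {ι K S : Type*} [SMul S K] (s : S) (u v w : ι → K) :
    s • blockRow u v w = blockRow (s • u) (s • v) (s • w) := by
  ext ⟨j, k⟩
  fin_cases j <;> rfl

/-- The matrix `[[I, τR, 0], [−κ₁L, I, −κ₂I], [−pL, 0, (1−p)I]]` over an arbitrary commutative ring
and index type, encoded as a flattened `3 × 3` matrix of blocks; `Amat` is definitionally the case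
of real `n × n` blocks. -/
def blockMatrix {ι K : Type*} [DecidableEq ι] [CommRing K] (L R : Matrix ι ι K) (τ κ₁ κ₂ p : K) :
    Matrix (Fin 3 × ι) (Fin 3 × ι) K :=
  comp (Fin 3) (Fin 3) ι ι K
    !![1, τ • R, 0;
      (-κ₁) • L, 1, (-κ₂) • 1;
      (-p) • L, 0, (1 - p) • 1]

section CommRing

variable {ι K : Type*} [Fintype ι] [DecidableEq ι] [CommRing K]

theorem blockRow_vecMul_blockMatrix (L R : Matrix ι ι K) (τ κ₁ κ₂ p : K) (u v w : ι → K) :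
    blockRow u v w ᵥ* blockMatrix L R τ κ₁ κ₂ p
      = blockRow (u + (-κ₁) • (v ᵥ* L) + (-p) • (w ᵥ* L)) (τ • (u ᵥ* R) + v)
          ((-κ₂) • v + (1 - p) • w) := by
  rw [blockRow, blockMatrix, uncurry_vecMul_comp]
  congr 1
  ext j : 1
  fin_cases j <;> simp [Fin.sum_univ_three, vecMul_smul, vecMul_neg]

theorem blockRow_smul_smul_vecMul_blockMatrix {L : Matrix ι ι K} {ξ : ι → K} (hξ : ξ ᵥ* L = 0)
    (R : Matrix ι ι K) (τ κ₁ κ₂ p : K) (u : ι → K) (b c : K) :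
    blockRow u (b • ξ) (c • ξ) ᵥ* blockMatrix L R τ κ₁ κ₂ p
      = blockRow u (τ • (u ᵥ* R) + b • ξ) ((-κ₂ * b + (1 - p) * c) • ξ) := by
  simp only [blockRow_vecMul_blockMatrix, smul_vecMul, hξ, smul_zero, add_zero, smul_smul,
    add_smul]

theorem blockRow_eigenvector_one_sub {L : Matrix ι ι K} {ξ : ι → K} (hξ : ξ ᵥ* L = 0)
    (R : Matrix ι ι K) (τ κ₁ κ₂ p : K) :
    blockRow 0 0 ξ ᵥ* blockMatrix L R τ κ₁ κ₂ p = (1 - p) • blockRow 0 0 ξ := by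
  simpa only [zero_smul, one_smul, zero_vecMul, smul_zero, add_zero, mul_zero, zero_add, mul_one,
    blockRow_smul] using blockRow_smul_smul_vecMul_blockMatrix hξ R τ κ₁ κ₂ p 0 0 1

end CommRing

section Field

variable {ι K : Type*} [Fintype ι] [DecidableEq ι] [Field K] {L R : Matrix ι ι K} {ζ ξ : ι → K}
  {p : K}

theorem blockRow_eigenvector_one (hξ : ξ ᵥ* L = 0) (hp : p ≠ 0) (τ κ₁ κ₂ : K) :
    blockRow 0 (τ • ξ) ((-(τ * κ₂ / p)) • ξ) ᵥ* blockMatrix L R τ κ₁ κ₂ p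
      = blockRow 0 (τ • ξ) ((-(τ * κ₂ / p)) • ξ) := by
  have third_coord : -κ₂ * τ + (1 - p) * -(τ * κ₂ / p) = -(τ * κ₂ / p) := by
    field_simp
    ring
  rw [blockRow_smul_smul_vecMul_blockMatrix hξ, zero_vecMul, smul_zero, zero_add, third_coord]

theorem blockRow_generalizedEigenvector_one (hζ : ζ ᵥ* R = ξ) (hξ : ξ ᵥ* L = 0) (hp : p ≠ 0)
    (τ κ₁ κ₂ : K) :
    blockRow ζ ((-τ) • ξ) ((τ * κ₂ * (1 / p + 1 / p ^ 2)) • ξ) ᵥ* blockMatrix L R τ κ₁ κ₂ p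
      = blockRow ζ ((-τ) • ξ) ((τ * κ₂ * (1 / p + 1 / p ^ 2)) • ξ)
        + blockRow 0 (τ • ξ) ((-(τ * κ₂ / p)) • ξ) := by
  have third_coord : -κ₂ * -τ + (1 - p) * (τ * κ₂ * (1 / p + 1 / p ^ 2))
      = τ * κ₂ * (1 / p + 1 / p ^ 2) + -(τ * κ₂ / p) := by
    field_simp
    ring
  rw [blockRow_smul_smul_vecMul_blockMatrix hξ, hζ, third_coord, blockRow_add, add_zero,
    add_smul, add_comm (τ • ξ)]

theorem stmt4_general (hζ : ζ ᵥ* R = ξ) (hξ : ξ ᵥ* L = 0) (hp : p ≠ 0) (τ κ₁ κ₂ γ : K) :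
    (γ • blockRow 0 (τ • ξ) ((-(τ * κ₂ / p)) • ξ)) ᵥ* blockMatrix L R τ κ₁ κ₂ p
        = γ • blockRow 0 (τ • ξ) ((-(τ * κ₂ / p)) • ξ)
    ∧ (γ • blockRow ζ ((-τ) • ξ) ((τ * κ₂ * (1 / p + 1 / p ^ 2)) • ξ)) ᵥ*
          blockMatrix L R τ κ₁ κ₂ p
        = γ • blockRow ζ ((-τ) • ξ) ((τ * κ₂ * (1 / p + 1 / p ^ 2)) • ξ)
          + γ • blockRow 0 (τ • ξ) ((-(τ * κ₂ / p)) • ξ)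
    ∧ (γ • blockRow 0 0 ξ) ᵥ* blockMatrix L R τ κ₁ κ₂ p = (1 - p) • (γ • blockRow 0 0 ξ) := by
  simp only [smul_vecMul]
  refine ⟨?_, ?_, ?_⟩
  · rw [blockRow_eigenvector_one hξ hp]
  · rw [blockRow_generalizedEigenvector_one hζ hξ hp, smul_add]
  · rw [blockRow_eigenvector_one_sub hξ, smul_comm]

end Field

theorem stmt4 (n : ℕ) (hn : 1 ≤ n) (L R : Matrix (Fin n) (Fin n) ℝ)
    (hRdiag : ∀ i j, i ≠ j → R i j = 0) (hRpos : ∀ i, 0 < R i i)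
    (τ κ₁ κ₂ p : ℝ) (hτ : τ ≠ 0) (hp : p ≠ 0)
    (ξ : Fin n → ℝ) (hξL : ξ ᵥ* L = 0) (hξ1 : ξ ⬝ᵥ (fun _ => 1) = 1)
    (γ : ℝ) (hγ : γ⁻¹ = ∑ i, ξ i / R i i) :
    (γ • vec3 0 (τ • ξ) ((-(τ * κ₂ / p)) • ξ)) ᵥ* (Amat n L R τ κ₁ κ₂ p)
        = γ • vec3 0 (τ • ξ) ((-(τ * κ₂ / p)) • ξ)
    ∧ (γ • vec3 (ξ ᵥ* R⁻¹) ((-τ) • ξ) ((τ * κ₂ * (1 / p + 1 / p ^ 2)) • ξ)) ᵥ*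
          (Amat n L R τ κ₁ κ₂ p)
        = γ • vec3 (ξ ᵥ* R⁻¹) ((-τ) • ξ) ((τ * κ₂ * (1 / p + 1 / p ^ 2)) • ξ)
          + γ • vec3 0 (τ • ξ) ((-(τ * κ₂ / p)) • ξ)
    ∧ (γ • vec3 0 0 ξ) ᵥ* (Amat n L R τ κ₁ κ₂ p) = (1 - p) • (γ • vec3 0 0 ξ) := by
  have hR : IsUnit R := (isUnit_iff_of_isDiag hRdiag).2 fun i => (hRpos i).ne'.isUnit
  exact stmt4_general (vecMul_inv_vecMul hR ξ) hξL hp τ κ₁ κ₂ γ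
end

section
/- Assume τ ≠ 0 and p ≠ 0, and assume ξᵀ1_n = 1 and γ·(ξᵀR⁻¹1_n) = 1. With ζ₁ = (1_n, 0_n, 0_n), ζ₂ = (1_n, (1/τ)R⁻¹1_n, 0_n), ζ₃ = (−(τκ₂/p²)1_n, (κ₂/p)R⁻¹1_n, R⁻¹1_n), η₁ᵀ = γ(ξᵀR⁻¹, −τξᵀ, τκ₂(1/p + 1/p²)ξᵀ), η₂ᵀ = γ(0, τξᵀ, −(τκ₂/p)ξᵀ), η₃ᵀ = γ(0, 0, ξᵀ), the biorthogonality relations η_iᵀζ_j = 1 if i = j and η_iᵀζ_j = 0 if i ≠ j hold for all i, j ∈ {1, 2, 3}. -/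
open Matrix

/-! Relative to the block vectors `(ξᵀS, ξᵀ, ξᵀ)` and `(e, Se, Se)`, where `S = R⁻¹` and `e = 1_n`,
the families `ηᵢ / γ` and `ζⱼ` have `3 × 3` coefficient matrices. Paired block by block, these
vectors all give the same number `ξᵀSe = 1 / γ`, so biorthogonality says exactly that the two
coefficient matrices are inverse to each other. -/

section BlockVectors

variable {K ι κ : Type*} [Fintype ι] [Fintype κ]

theorem uncurry_dotProduct_uncurry [NonUnitalNonAssocSemiring K] (u v : κ → ι → K) :
    Function.uncurry u ⬝ᵥ Function.uncurry v = ∑ k, u k ⬝ᵥ v k :=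
  Fintype.sum_prod_type _

theorem uncurry_smul_dotProduct_uncurry_smul [CommSemiring K] {φ b : κ → ι → K} {s : K}
    (hpair : ∀ k, φ k ⬝ᵥ b k = s) (c d : κ → K) :
    Function.uncurry (fun k => c k • φ k) ⬝ᵥ Function.uncurry (fun k => d k • b k) =
      c ⬝ᵥ d * s := by
  rw [uncurry_dotProduct_uncurry, dotProduct, Finset.sum_mul]
  simp only [smul_dotProduct, dotProduct_smul, hpair, smul_eq_mul, mul_assoc, mul_left_comm]

theorem biorthogonal_of_mul_eq_one {μ : Type*} [DecidableEq μ] [CommSemiring K]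
    {φ b : κ → ι → K} {s γ : K} (hpair : ∀ k, φ k ⬝ᵥ b k = s) (hγ : γ * s = 1)
    {A : Matrix μ κ K} {B : Matrix κ μ K} (hAB : A * B = 1) (i j : μ) :
    (γ • Function.uncurry fun k => A i k • φ k) ⬝ᵥ (Function.uncurry fun k => B k j • b k) =
      if i = j then 1 else 0 :=
  calc
    _ = γ * ((A * B) i j * s) := by
      rw [smul_dotProduct, uncurry_smul_dotProduct_uncurry_smul hpair, smul_eq_mul, mul_apply']
    _ = (A * B) i j := by rw [mul_left_comm, hγ, mul_one]
    _ = if i = j then 1 else 0 := by rw [hAB, one_apply]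

end BlockVectors

/-- The matrix whose `j`-th column holds the coefficients of `ζⱼ` in the blocks `e`, `Se`, `Se`.
The free entries `x` and `y` stand for `-τκ₂/p²` and `κ₂/p`. -/
def zetaCoeff {K : Type*} [DivisionRing K] (τ x y : K) : Matrix (Fin 3) (Fin 3) K :=
  !![1, 1, x; 0, 1 / τ, y; 0, 0, 1]

/-- The matrix whose `i`-th row holds the coefficients of `ηᵢ / γ` in the blocks `ξᵀS`, `ξᵀ`, `ξᵀ`,
with `x` and `y` as in `zetaCoeff`. -/
def etaCoeff {K : Type*} [Ring K] (τ x y : K) : Matrix (Fin 3) (Fin 3) K :=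
  !![1, -τ, τ * y - x; 0, τ, -(τ * y); 0, 0, 1]

theorem etaCoeff_mul_zetaCoeff {K : Type*} [DivisionRing K] {τ : K} (hτ : τ ≠ 0) (x y : K) :
    etaCoeff τ x y * zetaCoeff τ x y = 1 := by
  ext i j
  fin_cases i <;> fin_cases j <;>
    simp [etaCoeff, zetaCoeff, mul_apply, Fin.sum_univ_three, hτ, sub_eq_add_neg, add_assoc]

theorem stmt5_general {K ι : Type*} [Field K] [Fintype ι] (S : Matrix ι ι K) (ξ e : ι → K)
    {τ γ : K} (x y : K) (hτ : τ ≠ 0) (hγ : γ * ((ξ ᵥ* S) ⬝ᵥ e) = 1) (i j : Fin 3) :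
    (![γ • Function.uncurry ![ξ ᵥ* S, (-τ) • ξ, (τ * y - x) • ξ],
        γ • Function.uncurry ![(0 : ι → K), τ • ξ, (-(τ * y)) • ξ],
        γ • Function.uncurry ![(0 : ι → K), 0, ξ]] i)
      ⬝ᵥ
    (![Function.uncurry ![e, 0, 0],
        Function.uncurry ![e, (1 / τ) • (S *ᵥ e), 0],
        Function.uncurry ![x • e, y • (S *ᵥ e), S *ᵥ e]] j)
      = if i = j then 1 else 0 := by
  let φ : Fin 3 → ι → K := ![ξ ᵥ* S, ξ, ξ]
  let b : Fin 3 → ι → K := ![e, S *ᵥ e, S *ᵥ e]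
  have hpair : ∀ k, φ k ⬝ᵥ b k = (ξ ᵥ* S) ⬝ᵥ e :=
    Fin.forall_fin_succ.2 ⟨rfl, Fin.forall_fin_two.2 ⟨dotProduct_mulVec .., dotProduct_mulVec ..⟩⟩
  convert biorthogonal_of_mul_eq_one hpair hγ (etaCoeff_mul_zetaCoeff hτ x y) i j using 2
  · ext ⟨k, l⟩
    fin_cases i <;> fin_cases k <;> simp [etaCoeff, φ]
  · ext ⟨k, l⟩
    fin_cases j <;> fin_cases k <;> simp [zetaCoeff, b]

theorem stmt5 (n : ℕ) (hn : 1 ≤ n) (R : Matrix (Fin n) (Fin n) ℝ)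
    (hRdiag : ∀ i j, i ≠ j → R i j = 0) (hRpos : ∀ i, 0 < R i i)
    (ξ : Fin n → ℝ) (τ κ₂ p γ : ℝ) (hτ : τ ≠ 0) (hp : p ≠ 0)
    (hξ1 : ξ ⬝ᵥ (fun _ => 1) = 1)
    (hγ : γ * ((ξ ᵥ* R⁻¹) ⬝ᵥ (fun _ => 1)) = 1) :
    ∀ i j : Fin 3,
      (![γ • vec3 (ξ ᵥ* R⁻¹) ((-τ) • ξ) ((τ * κ₂ * (1 / p + 1 / p ^ 2)) • ξ),
          γ • vec3 0 (τ • ξ) ((-(τ * κ₂ / p)) • ξ),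
          γ • vec3 0 0 ξ] i)
        ⬝ᵥ
      (![vec3 (fun _ => 1) 0 0,
          vec3 (fun _ => 1) ((1 / τ) • (R⁻¹ *ᵥ fun _ => 1)) 0,
          vec3 (fun _ => -(τ * κ₂ / p ^ 2)) ((κ₂ / p) • (R⁻¹ *ᵥ fun _ => 1))
            (R⁻¹ *ᵥ fun _ => 1)] j)
        = if i = j then 1 else 0 := by
  have hcoeff : τ * κ₂ * (1 / p + 1 / p ^ 2) = τ * (κ₂ / p) - -(τ * κ₂ / p ^ 2) := by ring
  have hconst : (fun _ : Fin n => -(τ * κ₂ / p ^ 2)) = (-(τ * κ₂ / p ^ 2)) • fun _ => 1 := by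
    simp only [Pi.smul_def, smul_eq_mul, mul_one]
  rw [hcoeff, hconst, mul_div_assoc τ κ₂ p]
  exact stmt5_general R⁻¹ ξ (fun _ => 1) _ _ hτ hγ
end

section
/- Assume L·1_n = 0 and γ·(ξᵀR⁻¹1_n) = 1. Define the 3n×3n projection N = blockdiag(N₁, N₂, N₂) with N₁ = I_n − γ·1_n ξᵀR⁻¹ and N₂ = I_n − γ·R⁻¹1_n ξᵀ. Then N·A·N = N·A; consequently, if z_{k+1} = A·z_k and δz_k := N·z_k, the deviations evolve autonomously according to δz_{k+1} = (N·A)·δz_k. -/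
open Matrix

/-- The 3n×3n block-diagonal projection N = blockdiag(N₁, N₂, N₂) with
N₁ = I − γ·1_n ξᵀR⁻¹ and N₂ = I − γ·R⁻¹1_n ξᵀ. -/
noncomputable def Nmat (n : ℕ) (R : Matrix (Fin n) (Fin n) ℝ) (ξ : Fin n → ℝ) (γ : ℝ) :
    Matrix (Fin 3 × Fin n) (Fin 3 × Fin n) ℝ :=
  Matrix.of fun a b =>
    ![![(1 : Matrix (Fin n) (Fin n) ℝ)
          - γ • vecMulVec (fun _ => 1) (ξ ᵥ* R⁻¹), 0, 0],
      ![0, (1 : Matrix (Fin n) (Fin n) ℝ)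
          - γ • vecMulVec (R⁻¹ *ᵥ fun _ => 1) ξ, 0],
      ![0, 0, (1 : Matrix (Fin n) (Fin n) ℝ)
          - γ • vecMulVec (R⁻¹ *ᵥ fun _ => 1) ξ]] a.1 b.1 a.2 b.2

/- The kernel of `N` consists of the states `(a 1, b R⁻¹1, c R⁻¹1)`, and `A` maps such a state to
`((a + τ b) 1, (b - κ₂ c) R⁻¹1, (1 - p) c R⁻¹1)` because `L 1 = 0`. So `A` preserves the kernel of
the projection `N`, which is what `N A N = N A` says. On the blocks this comes down to
`R N₂ = N₁ R`, `L N₁ = L` and the idempotency of `N₁` and `N₂`. -/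

/-- The matrix `I - γ v φᵀ`, which removes the component along `v` measured by the covector `φ`. It
is a projection when `γ (φᵀ v) = 1`. -/
def rankOneCompl {K m : Type*} [CommRing K] [DecidableEq m] (γ : K) (v φ : m → K) : Matrix m m K :=
  1 - γ • vecMulVec v φ

/-- The matrix `A` of the theorem as a `3 × 3` matrix over an algebra `S`, so that its blocks are
multiplied as scalars; `Matrix.comp` flattens it when `S` is itself a matrix ring. -/
def blockSystem {K S : Type*} [CommRing K] [Ring S] [Algebra K S] (L R : S) (τ κ₁ κ₂ p : K) :
    Matrix (Fin 3) (Fin 3) S :=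
  !![1, τ • R, 0; (-κ₁) • L, 1, (-κ₂) • 1; (-p) • L, 0, (1 - p) • 1]

/-- The matrix `N = blockdiag(N₁, N₂, N₂)` of the theorem, encoded like `blockSystem`. -/
def blockProj {S : Type*} [Zero S] (N₁ N₂ : S) : Matrix (Fin 3) (Fin 3) S :=
  !![N₁, 0, 0; 0, N₂, 0; 0, 0, N₂]

section RankOneCompl

variable {K m n : Type*} [CommRing K] [Fintype m] [DecidableEq m]

theorem isIdempotentElem_rankOneCompl {γ : K} {v φ : m → K} (h : γ * (φ ⬝ᵥ v) = 1) :
    IsIdempotentElem (rankOneCompl γ v φ) := by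
  have hproj : IsIdempotentElem (γ • vecMulVec v φ) := by
    rw [IsIdempotentElem, Matrix.smul_mul, Matrix.mul_smul, vecMulVec_mul_vecMulVec,
      vecMulVec_smul, smul_smul γ (φ ⬝ᵥ v), h, one_smul]
  exact hproj.one_sub

theorem mul_rankOneCompl_of_mulVec_eq_zero {M : Matrix n m K} {v : m → K} (hM : M *ᵥ v = 0)
    (γ : K) (φ : m → K) : M * rankOneCompl γ v φ = M := by
  rw [rankOneCompl, Matrix.mul_sub, Matrix.mul_one, Matrix.mul_smul, mul_vecMulVec, hM,
    zero_vecMulVec, smul_zero, sub_zero]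

theorem mul_rankOneCompl_vecMul [Fintype n] [DecidableEq n] (M : Matrix n m K) (γ : K) (w : m → K)
    (ψ : n → K) : M * rankOneCompl γ w (ψ ᵥ* M) = rankOneCompl γ (M *ᵥ w) ψ * M := by
  simp only [rankOneCompl, Matrix.mul_sub, Matrix.sub_mul, Matrix.mul_one, Matrix.one_mul,
    Matrix.mul_smul, Matrix.smul_mul, mul_vecMulVec, vecMulVec_mul]

end RankOneCompl

theorem blockProj_mul_blockSystem_mul_blockProj {K S : Type*} [CommRing K] [Ring S] [Algebra K S]
    {L R N₁ N₂ : S} (h₁ : IsIdempotentElem N₁) (h₂ : IsIdempotentElem N₂)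
    (hR : R * N₂ = N₁ * R) (hL : L * N₁ = L) (τ κ₁ κ₂ p : K) :
    blockProj N₁ N₂ * blockSystem L R τ κ₁ κ₂ p * blockProj N₁ N₂ =
      blockProj N₁ N₂ * blockSystem L R τ κ₁ κ₂ p := by
  have hNR : N₁ * R * N₂ = N₁ * R := by rw [mul_assoc, hR, ← mul_assoc, h₁.eq]
  have hNL : N₂ * L * N₁ = N₂ * L := by rw [mul_assoc, hL]
  simp [blockProj, blockSystem, h₁.eq, h₂.eq, hNR, hNL]

theorem isUnit_det_of_isDiag {K m : Type*} [Field K] [Fintype m] [DecidableEq m]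
    {D : Matrix m m K} (hD : D.IsDiag) (hne : ∀ i, D i i ≠ 0) : IsUnit D.det := by
  rw [← hD.diagonal_diag, det_diagonal]
  exact (Finset.prod_ne_zero_iff.mpr fun i _ => hne i).isUnit

/- The vectors `v`, `w` and `ψ` play the roles of `1_n`, `R⁻¹ 1_n` and `ξᵀ R⁻¹`. -/
theorem stmt8_general {K m : Type*} [CommRing K] [Fintype m] [DecidableEq m]
    {L R N₁ N₂ : Matrix m m K} {A N : Matrix (Fin 3 × m) (Fin 3 × m) K} {τ κ₁ κ₂ p γ : K}
    {v w ξ ψ : m → K}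
    (hA : A = comp _ _ _ _ _ (blockSystem L R τ κ₁ κ₂ p))
    (hN : N = comp _ _ _ _ _ (blockProj N₁ N₂))
    (hN₁ : N₁ = rankOneCompl γ v ψ) (hN₂ : N₂ = rankOneCompl γ w ξ)
    (hw : R *ᵥ w = v) (hψ : ψ ᵥ* R = ξ) (hL : L *ᵥ v = 0) (hγ : γ * (ψ ⬝ᵥ v) = 1) :
    N * A * N = N * A ∧ ∀ z : ℕ → Fin 3 × m → K, (∀ k, z (k + 1) = A *ᵥ z k) →
      ∀ k, N *ᵥ z (k + 1) = (N * A) *ᵥ (N *ᵥ z k) := by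
  have hγ' : γ * (ξ ⬝ᵥ w) = 1 := by rwa [← hψ, ← dotProduct_mulVec, hw]
  have hRN : R * N₂ = N₁ * R := by rw [hN₁, hN₂, ← hψ, ← hw, mul_rankOneCompl_vecMul]
  have hLN : L * N₁ = L := hN₁ ▸ mul_rankOneCompl_of_mulVec_eq_zero hL γ ψ
  have h₁ : IsIdempotentElem N₁ := hN₁ ▸ isIdempotentElem_rankOneCompl hγ
  have h₂ : IsIdempotentElem N₂ := hN₂ ▸ isIdempotentElem_rankOneCompl hγ'
  have hNAN : N * A * N = N * A := by
    have hblock := blockProj_mul_blockSystem_mul_blockProj h₁ h₂ hRN hLN τ κ₁ κ₂ p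
    simpa only [map_mul, compRingEquiv_apply, ← hA, ← hN] using
      congrArg (compRingEquiv (Fin 3) m K) hblock
  refine ⟨hNAN, fun z hz k => ?_⟩
  rw [hz, mulVec_mulVec, mulVec_mulVec, hNAN]

theorem stmt8 (n : ℕ) (hn : 1 ≤ n) (L R : Matrix (Fin n) (Fin n) ℝ)
    (hRdiag : ∀ i j, i ≠ j → R i j = 0) (hRpos : ∀ i, 0 < R i i)
    (τ κ₁ κ₂ p : ℝ) (ξ : Fin n → ℝ) (γ : ℝ)
    (hL1 : L *ᵥ (fun _ => (1 : ℝ)) = 0)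
    (hγ : γ * ((ξ ᵥ* R⁻¹) ⬝ᵥ (fun _ => 1)) = 1) :
    (Nmat n R ξ γ) * (Amat n L R τ κ₁ κ₂ p) * (Nmat n R ξ γ)
        = (Nmat n R ξ γ) * (Amat n L R τ κ₁ κ₂ p)
    ∧ ∀ z : ℕ → (Fin 3 × Fin n → ℝ),
        (∀ k, z (k + 1) = (Amat n L R τ κ₁ κ₂ p) *ᵥ z k) →
        ∀ k, (Nmat n R ξ γ) *ᵥ z (k + 1)
          = ((Nmat n R ξ γ) * (Amat n L R τ κ₁ κ₂ p)) *ᵥ ((Nmat n R ξ γ) *ᵥ z k) := by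
  have hR : IsUnit R.det := isUnit_det_of_isDiag (fun i j => hRdiag i j) fun i => (hRpos i).ne'
  exact stmt8_general rfl rfl rfl rfl (by simp [mul_nonsing_inv R hR])
    (by simp [nonsing_inv_mul R hR]) hL1 hγ
end

section
/- Let q be a polynomial over ℂ of degree d ≥ 1 with q(1) ≠ 0, and let Q be the polynomial of degree d determined by Q(s) = (s−1)^d · q((s+1)/(s−1)) for all s ≠ 1 (Q exists and is unique, with leading coefficient q(1)). Then every root of q lies in the open unit disc {λ : |λ| < 1} if and only if every root of Q has strictly negative real part. -/
/-!
Clearing denominators in `q ((s + 1) / (s - 1))` means evaluating the homogenization of `q` at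
`(s + 1, s - 1)`. At `s = 1` this gives `2 ^ d` times the leading coefficient of `q`, so, although
the quotient has a pole there, `1` is not a root of the resulting polynomial. Away from `1` the map
`s ↦ (s + 1) / (s - 1)` is an involution, which matches the roots of the two polynomials and
exchanges the left half-plane with the unit disc.
-/

open Polynomial

theorem forall_ne_iff_forall_of_self {α : Sort*} {p : α → Prop} {a : α} (ha : p a) :
    (∀ b ≠ a, p b) ↔ ∀ b, p b := by
  rw [← and_forall_ne (p := p) a, and_iff_right ha]

theorem eval_homogenize_of_eq_zero {R : Type*} [CommSemiring R] (p : R[X]) (n : ℕ)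
    (x : Fin 2 → R) (hx : x 1 = 0) : (p.homogenize n).eval x = p.coeff n * x 0 ^ n := by
  rw [homogenize, map_sum, Finset.sum_eq_single (n, 0)]
  · simp [MvPolynomial.eval_monomial, Finsupp.prod_fintype]
  · rintro ⟨k, l⟩ hkl hne
    have hl : l ≠ 0 := by
      rintro rfl
      simp_all
    simp [MvPolynomial.eval_monomial, Finsupp.prod_fintype, hx, hl]
  · simp

section Cayley

variable {K : Type*} [Field K]

/-- The Cayley transform `s ↦ (s + 1) / (s - 1)`, a Möbius transformation exchanging the open left
half-plane and the open unit disc. It has a pole at `s = 1`, where the value here is the junk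
value `0`. -/
def cayley (s : K) : K := (s + 1) / (s - 1)

theorem cayley_ne_one [NeZero (2 : K)] {s : K} (hs : s ≠ 1) : cayley s ≠ 1 := by
  have hs' : s - 1 ≠ 0 := sub_ne_zero.mpr hs
  have hsub : cayley s - 1 = 2 / (s - 1) := by
    rw [cayley]
    field_simp
    ring
  exact sub_ne_zero.mp (hsub ▸ div_ne_zero two_ne_zero hs')

theorem cayley_cayley [NeZero (2 : K)] {s : K} (hs : s ≠ 1) : cayley (cayley s) = s := by
  have hs' : s - 1 ≠ 0 := sub_ne_zero.mpr hs
  have hc : cayley s - 1 ≠ 0 := sub_ne_zero.mpr (cayley_ne_one hs)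
  rw [cayley, div_eq_iff hc, cayley]
  field_simp
  ring

theorem forall_ne_one_iff_forall_cayley [NeZero (2 : K)] {p : K → Prop} :
    (∀ z ≠ 1, p z) ↔ ∀ s ≠ 1, p (cayley s) :=
  ⟨fun h s hs ↦ h (cayley s) (cayley_ne_one hs),
    fun h z hz ↦ cayley_cayley hz ▸ h (cayley z) (cayley_ne_one hz)⟩

end Cayley

section CayleyTransform

variable {R K : Type*} [CommRing R] [Field K]

/-- The polynomial `(s - 1) ^ d * q ((s + 1) / (s - 1))` in `s`, where `d` is the degree of `q`.
It is encoded as the homogenization of `q` evaluated at `(X + 1, X - 1)`, so that its value at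
`s = 1` makes sense. -/
noncomputable def cayleyTransform (q : R[X]) : R[X] :=
  MvPolynomial.aeval ![X + 1, X - 1] (q.homogenize q.natDegree)

theorem eval_cayleyTransform (q : R[X]) (s : R) :
    (cayleyTransform q).eval s = (q.homogenize q.natDegree).eval ![s + 1, s - 1] := by
  rw [cayleyTransform, ← coe_aeval_eq_eval, MvPolynomial.comp_aeval_apply,
    ← MvPolynomial.coe_aeval_eq_eval, RingHom.coe_coe]
  congr 2
  ext i
  fin_cases i <;> simp

theorem eval_cayleyTransform_one (q : R[X]) :
    (cayleyTransform q).eval 1 = q.leadingCoeff * 2 ^ q.natDegree := by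
  rw [eval_cayleyTransform, eval_homogenize_of_eq_zero _ _ _ (sub_self 1), coeff_natDegree,
    Matrix.cons_val_zero, one_add_one_eq_two]

theorem eval_cayleyTransform_of_ne_one (q : K[X]) {s : K} (hs : s ≠ 1) :
    (cayleyTransform q).eval s = (s - 1) ^ q.natDegree * q.eval (cayley s) := by
  rw [eval_cayleyTransform, eval_homogenize le_rfl _ (sub_ne_zero.mpr hs), mul_comm, cayley,
    Matrix.cons_val_zero, Matrix.cons_val_one, Matrix.cons_val_fin_one]

theorem eq_cayleyTransform [Infinite K] {q Q : K[X]}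
    (hQ : ∀ s ≠ 1, Q.eval s = (s - 1) ^ q.natDegree * q.eval (cayley s)) :
    Q = cayleyTransform q :=
  eq_of_infinite_eval_eq _ _ <| (Set.finite_singleton 1).infinite_compl.mono fun s hs ↦
    (hQ s hs).trans (eval_cayleyTransform_of_ne_one q hs).symm

theorem not_isRoot_cayleyTransform_one [NeZero (2 : K)] {q : K[X]} (hq : q ≠ 0) :
    ¬ (cayleyTransform q).IsRoot 1 := by
  rw [IsRoot, eval_cayleyTransform_one]
  exact mul_ne_zero (leadingCoeff_ne_zero.mpr hq) (pow_ne_zero _ two_ne_zero)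

theorem isRoot_cayleyTransform_iff {q : K[X]} {s : K} (hs : s ≠ 1) :
    (cayleyTransform q).IsRoot s ↔ q.IsRoot (cayley s) := by
  rw [IsRoot, eval_cayleyTransform_of_ne_one q hs, IsRoot,
    mul_eq_zero_iff_left (pow_ne_zero _ (sub_ne_zero.mpr hs))]

end CayleyTransform

theorem norm_add_lt_norm_sub_iff_inner_neg {E : Type*} [NormedAddCommGroup E]
    [InnerProductSpace ℝ E] {x y : E} : ‖x + y‖ < ‖x - y‖ ↔ inner ℝ x y < 0 := by
  rw [← sq_lt_sq₀ (norm_nonneg _) (norm_nonneg _), norm_add_sq_real, norm_sub_sq_real]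
  constructor <;> intro h <;> linarith

theorem norm_cayley_lt_one_iff {s : ℂ} (hs : s ≠ 1) : ‖cayley s‖ < 1 ↔ s.re < 0 := by
  have hinner : inner ℝ s 1 = s.re := by simp [Complex.inner]
  rw [cayley, norm_div, div_lt_one (norm_pos_iff.mpr (sub_ne_zero.mpr hs)),
    norm_add_lt_norm_sub_iff_inner_neg, hinner]

theorem stmt13 (d : ℕ) (hd : 1 ≤ d) (q Q : Polynomial ℂ)
    (hqdeg : q.natDegree = d) (hq1 : q.eval 1 ≠ 0)
    (hQ : ∀ s : ℂ, s ≠ 1 → Q.eval s = (s - 1) ^ d * q.eval ((s + 1) / (s - 1))) :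
    (∀ z : ℂ, q.IsRoot z → ‖z‖ < 1) ↔ (∀ z : ℂ, Q.IsRoot z → z.re < 0) := by
  subst hqdeg
  obtain rfl : Q = cayleyTransform q := eq_cayleyTransform hQ
  have hQ1 : ¬ (cayleyTransform q).IsRoot 1 :=
    not_isRoot_cayleyTransform_one (by rintro rfl; simp at hq1)
  calc (∀ z, q.IsRoot z → ‖z‖ < 1)
    _ ↔ ∀ z ≠ 1, q.IsRoot z → ‖z‖ < 1 :=
      (forall_ne_iff_forall_of_self fun h ↦ absurd h hq1).symm
    _ ↔ ∀ s ≠ 1, q.IsRoot (cayley s) → ‖cayley s‖ < 1 := forall_ne_one_iff_forall_cayley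
    _ ↔ ∀ s ≠ 1, (cayleyTransform q).IsRoot s → s.re < 0 :=
      forall₂_congr fun s hs ↦
        imp_congr (isRoot_cayleyTransform_iff hs).symm (norm_cayley_lt_one_iff hs)
    _ ↔ ∀ s, (cayleyTransform q).IsRoot s → s.re < 0 :=
      forall_ne_iff_forall_of_self fun h ↦ absurd h hQ1
end

section
/- Let δκ := κ₁ − κ₂ and assume ν > 0, p > 0, δκ > 0, and 2κ₁/(δκp) > 3. Define ω₀ʳ := (4(2−p)/(δκpν) + 2κ₁/(δκp) − 1)/(2κ₁/(δκp) − 3) and ω₀ᶦ := 4/(δκν) + 3 − 4κ₁/(δκp). Then ω₀ʳ < ω₀ᶦ if and only if ν < p(κ₂ − δκ·p)/(κ₁ − δκ·p)². -/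
/-!
Write `δκ = κ₁ - κ₂`, `r = κ₁ / (δκ p)` and `ν_c = p (κ₂ - δκ p) / (κ₁ - δκ p) ^ 2`. Clearing the
denominator `2 r - 3` of `ω₀ʳ` turns the terms free of `ν` into the perfect square `-8 (r - 1) ^ 2`,
and this gives the factorization
`ω₀ᶦ - ω₀ʳ = 8 (r - 1) ^ 2 / (ν (2 r - 3)) * (ν_c - ν)`,
whose first factor is positive when `ν > 0` and `2 r > 3`.
-/

section Field

variable {K : Type*} [Field K]

/-- The ratio `r = κ₁ / (δκ p)`, with `δκ = κ₁ - κ₂`, the variable in which `ω₀ᶦ - ω₀ʳ` factors. -/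
def kappaRatio (κ₁ κ₂ p : K) : K :=
  κ₁ / ((κ₁ - κ₂) * p)

/-- The quantity `ω₀ʳ`, written as in the theorem, with `δκ = κ₁ - κ₂`. -/
def omegaReal (κ₁ κ₂ p ν : K) : K :=
  (4 * (2 - p) / ((κ₁ - κ₂) * p * ν) + 2 * κ₁ / ((κ₁ - κ₂) * p) - 1)
    / (2 * κ₁ / ((κ₁ - κ₂) * p) - 3)

/-- The quantity `ω₀ᶦ`, written as in the theorem, with `δκ = κ₁ - κ₂`. -/
def omegaImag (κ₁ κ₂ p ν : K) : K :=
  4 / ((κ₁ - κ₂) * ν) + 3 - 4 * κ₁ / ((κ₁ - κ₂) * p)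

/-- The critical value `ν_c` of `ν`, at which `ω₀ʳ` and `ω₀ᶦ` coincide. -/
def criticalNu (κ₁ κ₂ p : K) : K :=
  p * (κ₂ - (κ₁ - κ₂) * p) / (κ₁ - (κ₁ - κ₂) * p) ^ 2

variable {κ₁ κ₂ p ν : K}

theorem omegaReal_eq_kappaRatio (hp : p ≠ 0) :
    omegaReal κ₁ κ₂ p ν =
      (4 * (2 * p⁻¹ - 1) / ((κ₁ - κ₂) * ν) + 2 * kappaRatio κ₁ κ₂ p - 1)
        / (2 * kappaRatio κ₁ κ₂ p - 3) := by
  have h : 4 * (2 - p) / ((κ₁ - κ₂) * p * ν) = 4 * (2 * p⁻¹ - 1) / ((κ₁ - κ₂) * ν) := by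
    field_simp
  rw [omegaReal, h, mul_div_assoc 2 κ₁, kappaRatio]

theorem omegaImag_eq_kappaRatio :
    omegaImag κ₁ κ₂ p ν = 4 / ((κ₁ - κ₂) * ν) + 3 - 4 * kappaRatio κ₁ κ₂ p := by
  rw [omegaImag, mul_div_assoc, kappaRatio]

theorem criticalNu_eq_kappaRatio (hδκ : κ₁ - κ₂ ≠ 0) (hp : p ≠ 0) :
    criticalNu κ₁ κ₂ p =
      (kappaRatio κ₁ κ₂ p - 1 - p⁻¹) / ((κ₁ - κ₂) * (kappaRatio κ₁ κ₂ p - 1) ^ 2) := by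
  have hκ₁ : κ₁ - (κ₁ - κ₂) * p = (κ₁ - κ₂) * p * (kappaRatio κ₁ κ₂ p - 1) := by
    rw [kappaRatio]
    field_simp
  have hκ₂ : κ₂ - (κ₁ - κ₂) * p = (κ₁ - κ₂) * p * (kappaRatio κ₁ κ₂ p - 1 - p⁻¹) := by
    rw [kappaRatio]
    field_simp
    ring
  rw [criticalNu, hκ₁, hκ₂]
  field_simp

theorem omegaImag_sub_omegaReal (hp : p ≠ 0) (hr : 2 * kappaRatio κ₁ κ₂ p - 3 ≠ 0) :
    omegaImag κ₁ κ₂ p ν - omegaReal κ₁ κ₂ p ν =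
      8 * ((kappaRatio κ₁ κ₂ p - 1 - p⁻¹) / ((κ₁ - κ₂) * ν) - (kappaRatio κ₁ κ₂ p - 1) ^ 2)
        / (2 * kappaRatio κ₁ κ₂ p - 3) := by
  rw [omegaImag_eq_kappaRatio, omegaReal_eq_kappaRatio hp, sub_div' hr]
  congr 1
  ring

theorem omegaImag_sub_omegaReal_eq_mul (hδκ : κ₁ - κ₂ ≠ 0) (hp : p ≠ 0) (hν : ν ≠ 0)
    (hr₁ : kappaRatio κ₁ κ₂ p - 1 ≠ 0) (hr₃ : 2 * kappaRatio κ₁ κ₂ p - 3 ≠ 0) :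
    omegaImag κ₁ κ₂ p ν - omegaReal κ₁ κ₂ p ν =
      8 * (kappaRatio κ₁ κ₂ p - 1) ^ 2 / (ν * (2 * kappaRatio κ₁ κ₂ p - 3))
        * (criticalNu κ₁ κ₂ p - ν) := by
  rw [omegaImag_sub_omegaReal hp hr₃, criticalNu_eq_kappaRatio hδκ hp]
  field_simp

end Field

theorem stmt14_general {K : Type*} [Field K] [LinearOrder K] [IsStrictOrderedRing K]
    {κ₁ κ₂ p ν : K} (hν : 0 < ν) (hcond : 3 < 2 * κ₁ / ((κ₁ - κ₂) * p)) :
    omegaReal κ₁ κ₂ p ν < omegaImag κ₁ κ₂ p ν ↔ ν < criticalNu κ₁ κ₂ p := by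
  have hδκp : (κ₁ - κ₂) * p ≠ 0 := by
    intro h
    rw [h, div_zero] at hcond
    exact hcond.not_gt three_pos
  obtain ⟨hδκ, hp⟩ := mul_ne_zero_iff.mp hδκp
  have hr₃ : 0 < 2 * kappaRatio κ₁ κ₂ p - 3 := by
    rwa [sub_pos, kappaRatio, ← mul_div_assoc]
  have hr₁ : 0 < kappaRatio κ₁ κ₂ p - 1 := by linarith
  rw [← sub_pos, omegaImag_sub_omegaReal_eq_mul hδκ hp hν.ne' hr₁.ne' hr₃.ne',
    mul_pos_iff_of_pos_left (by positivity), sub_pos]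

theorem stmt14 (κ₁ κ₂ p ν : ℝ) (hν : 0 < ν) (hp : 0 < p)
    (hδκ : 0 < κ₁ - κ₂) (hcond : 2 * κ₁ / ((κ₁ - κ₂) * p) > 3) :
    ((4 * (2 - p) / ((κ₁ - κ₂) * p * ν) + 2 * κ₁ / ((κ₁ - κ₂) * p) - 1)
          / (2 * κ₁ / ((κ₁ - κ₂) * p) - 3)
        < 4 / ((κ₁ - κ₂) * ν) + 3 - 4 * κ₁ / ((κ₁ - κ₂) * p))
      ↔ ν < p * (κ₂ - (κ₁ - κ₂) * p) / (κ₁ - (κ₁ - κ₂) * p) ^ 2 :=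
  stmt14_general hν hcond
end

section
/- Assume 0 < p < 2 and fix a real constant w̃ (the mean aggregate measurement noise). Let scalars (s̃_k, ỹ_k) evolve as s̃_{k+1} = s̃_k − κ₂·ỹ_k + κ₁·w̃ and ỹ_{k+1} = (1−p)·ỹ_k + p·w̃. Then ỹ_k → w̃, s̃_{k+1} − s̃_k → (κ₁−κ₂)·w̃, and s̃_k/k → (κ₁−κ₂)·w̃ as k → ∞. In particular, if κ₁ ≠ κ₂ and w̃ ≠ 0 then |s̃_k| → ∞ (the collective frequency drifts without bound), while if w̃ = 0 then s̃_k converges. -/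
/-!
The noise recursion contracts the error `y k - w` by the factor `1 - p`, so `y` converges to `w` and
the increments of `s` converge to `(κ₁ - κ₂) • w`; by Cesàro this is also the limit of the mean of
the increments, hence of `s k / k`. Moreover `s k - (κ₂ / p) • y k` gains exactly `(κ₁ - κ₂) • w` at
every step, so `s k - k • ((κ₁ - κ₂) • w)` converges as well.
-/

section

open Filter Topology

theorem tendsto_of_sub_eq_smul_sub {R M : Type*} [SeminormedRing R] [AddCommGroup M]
    [TopologicalSpace M] [ContinuousAdd M] [Module R M] [ContinuousSMul R M] {a : R} (ha : ‖a‖ < 1)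
    {y : ℕ → M} {w : M} (hy : ∀ k, y (k + 1) - w = a • (y k - w)) : Tendsto y atTop (𝓝 w) := by
  have error_eq : ∀ k, y k - w = a ^ k • (y 0 - w) := by
    intro k
    induction k with
    | zero => simp
    | succ k ih => rw [hy, ih, smul_smul, pow_succ']
  have error_tendsto : Tendsto (fun k => y k - w) atTop (𝓝 0) := by
    rw [funext error_eq, ← zero_smul R (y 0 - w)]
    exact (tendsto_pow_atTop_nhds_zero_of_norm_lt_one ha).smul_const (y 0 - w)
  simpa only [sub_add_cancel, zero_add] using error_tendsto.add_const w

theorem tendsto_inv_smul_of_tendsto_succ_sub {E : Type*} [NormedAddCommGroup E] [NormedSpace ℝ E]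
    {s : ℕ → E} {v : E} (h : Tendsto (fun k => s (k + 1) - s k) atTop (𝓝 v)) :
    Tendsto (fun k : ℕ => (k : ℝ)⁻¹ • s k) atTop (𝓝 v) := by
  have initial_term : Tendsto (fun k : ℕ => (k : ℝ)⁻¹ • s 0) atTop (𝓝 0) := by
    simpa only [zero_smul] using (tendsto_inv_atTop_nhds_zero_nat (𝕜 := ℝ)).smul_const (s 0)
  simpa only [Finset.sum_range_sub, ← smul_add, sub_add_cancel, add_zero] using
    h.cesaro_smul.add initial_term

theorem tendsto_norm_atTop_of_tendsto_inv_smul {α E : Type*} [NormedAddCommGroup E]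
    [NormedSpace ℝ E] {l : Filter α} {r : α → ℝ} {f : α → E} {v : E} (hr : Tendsto r l atTop)
    (hf : Tendsto (fun x => (r x)⁻¹ • f x) l (𝓝 v)) (hv : v ≠ 0) :
    Tendsto (fun x => ‖f x‖) l atTop := by
  refine (hf.norm.pos_mul_atTop (norm_pos_iff.2 hv) hr).congr' ?_
  filter_upwards [hr.eventually_gt_atTop 0] with x hx
  rw [norm_smul, norm_inv, Real.norm_of_nonneg hx.le, mul_right_comm, inv_mul_cancel₀ hx.ne',
    one_mul]

theorem sub_nsmul_eq_add_div_smul_sub {𝕜 E : Type*} [Field 𝕜] [AddCommGroup E] [Module 𝕜 E]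
    {κ₁ κ₂ p : 𝕜} {w : E} {s y : ℕ → E} (hp : p ≠ 0)
    (hs : ∀ k, s (k + 1) = s k - κ₂ • y k + κ₁ • w)
    (hy : ∀ k, y (k + 1) = (1 - p) • y k + p • w) (k : ℕ) :
    s k - k • ((κ₁ - κ₂) • w) = s 0 + (κ₂ / p) • (y k - y 0) := by
  induction k with
  | zero => simp
  | succ k ih =>
    have y_increment : (κ₂ / p) • (y (k + 1) - y k) = κ₂ • (w - y k) := by
      rw [hy, show (1 - p) • y k + p • w - y k = p • (w - y k) by module, smul_smul,
        div_mul_cancel₀ κ₂ hp]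
    calc s (k + 1) - (k + 1) • ((κ₁ - κ₂) • w)
        = (s k - k • ((κ₁ - κ₂) • w)) + κ₂ • (w - y k) := by rw [hs]; module
      _ = s 0 + (κ₂ / p) • (y (k + 1) - y 0) := by rw [ih, ← y_increment]; module

theorem stmt17_general {𝕜 E : Type*} [NormedField 𝕜] [NormedAddCommGroup E] [NormedSpace 𝕜 E]
    [NormedSpace ℝ E] {κ₁ κ₂ p : 𝕜} {w : E} {s y : ℕ → E} (hp : ‖1 - p‖ < 1)
    (hs : ∀ k, s (k + 1) = s k - κ₂ • y k + κ₁ • w)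
    (hy : ∀ k, y (k + 1) = (1 - p) • y k + p • w) :
    Tendsto y atTop (𝓝 w)
    ∧ Tendsto (fun k => s (k + 1) - s k) atTop (𝓝 ((κ₁ - κ₂) • w))
    ∧ Tendsto (fun k : ℕ => (k : ℝ)⁻¹ • s k) atTop (𝓝 ((κ₁ - κ₂) • w))
    ∧ ((κ₁ - κ₂) • w ≠ 0 → Tendsto (fun k => ‖s k‖) atTop atTop)
    ∧ Tendsto (fun k => s k - k • ((κ₁ - κ₂) • w)) atTop (𝓝 (s 0 + (κ₂ / p) • (w - y 0))) := by
  have y_tendsto : Tendsto y atTop (𝓝 w) :=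
    tendsto_of_sub_eq_smul_sub hp fun k => by rw [hy]; module
  have increment_tendsto : Tendsto (fun k => s (k + 1) - s k) atTop (𝓝 ((κ₁ - κ₂) • w)) := by
    rw [sub_smul]
    refine ((y_tendsto.const_smul κ₂).const_sub (κ₁ • w)).congr fun k => ?_
    rw [hs]; abel
  have mean_tendsto := tendsto_inv_smul_of_tendsto_succ_sub increment_tendsto
  have p_ne_zero : p ≠ 0 := by rintro rfl; simp at hp
  refine ⟨y_tendsto, increment_tendsto, mean_tendsto,
    tendsto_norm_atTop_of_tendsto_inv_smul tendsto_natCast_atTop_atTop mean_tendsto, ?_⟩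
  simp only [sub_nsmul_eq_add_div_smul_sub p_ne_zero hs hy]
  exact ((y_tendsto.sub_const (y 0)).const_smul (κ₂ / p)).const_add (s 0)

end

theorem stmt17 (κ₁ κ₂ p w : ℝ) (hp0 : 0 < p) (hp2 : p < 2)
    (s y : ℕ → ℝ)
    (hs : ∀ k, s (k + 1) = s k - κ₂ * y k + κ₁ * w)
    (hy : ∀ k, y (k + 1) = (1 - p) * y k + p * w) :
    Filter.Tendsto y Filter.atTop (nhds w)
    ∧ Filter.Tendsto (fun k => s (k + 1) - s k) Filter.atTop (nhds ((κ₁ - κ₂) * w))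
    ∧ Filter.Tendsto (fun k : ℕ => s k / (k : ℝ)) Filter.atTop (nhds ((κ₁ - κ₂) * w))
    ∧ ((κ₁ ≠ κ₂ ∧ w ≠ 0) →
        Filter.Tendsto (fun k => |s k|) Filter.atTop Filter.atTop)
    ∧ (w = 0 → ∃ c : ℝ, Filter.Tendsto s Filter.atTop (nhds c)) := by
  obtain ⟨y_lim, increment_lim, mean_lim, drift, asymptote⟩ :=
    stmt17_general (p := p) (w := w) (y := y) (abs_lt.2 ⟨by linarith, by linarith⟩) hs hy
  exact ⟨y_lim, increment_lim, by simpa only [smul_eq_mul, inv_mul_eq_div] using mean_lim,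
    fun h => drift (mul_ne_zero (sub_ne_zero.2 h.1) h.2),
    fun hw => ⟨_, asymptote.congr fun k => by simp [hw]⟩⟩
end

section
/- Assume κ₁ ≠ κ₂, p ≠ 0, τ ≠ 0, and let R be a diagonal n×n matrix with positive diagonal entries. Let δw ∈ ℝ^n. If (δx, δs, δy) ∈ (ℝ^n)³ is a fixed point of the deviation dynamics, i.e. δx = δx + τ·R·δs, δs = −κ₁·L·δx + δs − κ₂·δy + κ₁·δw, and δy = −p·L·δx + (1−p)·δy + p·δw, then δs = 0, δy = 0, and L·δx = δw. -/
open Matrix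

/-! Each update has the form `v ↦ v + c • r` with `c ≠ 0`, so it fixes `v` exactly when its
residual `r` vanishes. For `δx` the residual is `R δs`, and for `δy` it is `δw - L δx - δy`;
substituting `δw - L δx = δy` in the update of `δs` turns its increment into `(κ₁ - κ₂) • δy`. -/

theorem mulVec_eq_diag_mul_of_isDiag {ι α : Type*} [Fintype ι] [NonUnitalNonAssocSemiring α]
    {A : Matrix ι ι α} (hA : A.IsDiag) (v : ι → α) : A *ᵥ v = A.diag * v := by
  classical
  ext i
  conv_lhs => rw [← hA.diagonal_diag, mulVec_diagonal]
  rfl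

theorem eq_zero_of_isDiag_of_mulVec_eq_zero {ι α : Type*} [Fintype ι]
    [NonUnitalNonAssocSemiring α] [NoZeroDivisors α] {A : Matrix ι ι α} (hA : A.IsDiag)
    (hdiag : ∀ i, A i i ≠ 0) {v : ι → α} (hv : A *ᵥ v = 0) : v = 0 := by
  rw [mulVec_eq_diag_mul_of_isDiag hA] at hv
  exact funext fun i => (mul_eq_zero.mp (congrFun hv i)).resolve_left (hdiag i)

section FixedPoints

variable {K E F : Type*} [Ring K] [IsDomain K]
  [AddCommGroup E] [Module K E] [Module.IsTorsionFree K E]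
  [AddCommGroup F] [Module K F] [Module.IsTorsionFree K F]

theorem self_eq_add_smul_iff {c : K} (hc : c ≠ 0) {v r : E} : v = v + c • r ↔ r = 0 := by
  rw [left_eq_add, smul_eq_zero_iff_right hc]

theorem eq_relaxation_iff {p : K} (hp : p ≠ 0) {u w y : E} :
    y = (-p) • u + (1 - p) • y + p • w ↔ y = w - u := by
  have increment : (-p) • u + (1 - p) • y + p • w = y + p • (w - u - y) := by
    simp only [neg_smul, sub_smul, one_smul, smul_sub]
    abel
  rw [increment, self_eq_add_smul_iff hp, sub_eq_zero, eq_comm]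

theorem eq_feedback_iff {κ₁ κ₂ : K} (hκ : κ₁ ≠ κ₂) {s u w y : E} (hy : y = w - u) :
    s = (-κ₁) • u + s - κ₂ • y + κ₁ • w ↔ y = 0 := by
  have increment : (-κ₁) • u + s - κ₂ • y + κ₁ • w = s + (κ₁ - κ₂) • y := by
    simp only [hy, neg_smul, sub_smul, smul_sub]
    abel
  rw [increment, self_eq_add_smul_iff (sub_ne_zero.mpr hκ)]

theorem stmt18_general {L : E → F} {R : F → E} (hR : ∀ s, R s = 0 → s = 0)
    {τ κ₁ κ₂ p : K} (hκ : κ₁ ≠ κ₂) (hp : p ≠ 0) (hτ : τ ≠ 0)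
    {δw δs δy : F} {δx : E}
    (h1 : δx = δx + τ • R δs)
    (h2 : δs = (-κ₁) • L δx + δs - κ₂ • δy + κ₁ • δw)
    (h3 : δy = (-p) • L δx + (1 - p) • δy + p • δw) :
    δs = 0 ∧ δy = 0 ∧ L δx = δw := by
  have hs : δs = 0 := hR δs ((self_eq_add_smul_iff hτ).mp h1)
  have hy : δy = δw - L δx := (eq_relaxation_iff hp).mp h3
  have hy₀ : δy = 0 := (eq_feedback_iff hκ hy).mp h2
  exact ⟨hs, hy₀, (sub_eq_zero.mp (hy.symm.trans hy₀)).symm⟩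

end FixedPoints

theorem stmt18 (n : ℕ) (hn : 1 ≤ n) (L R : Matrix (Fin n) (Fin n) ℝ)
    (hRdiag : ∀ i j, i ≠ j → R i j = 0) (hRpos : ∀ i, 0 < R i i)
    (τ κ₁ κ₂ p : ℝ) (hκ : κ₁ ≠ κ₂) (hp : p ≠ 0) (hτ : τ ≠ 0)
    (δw δx δs δy : Fin n → ℝ)
    (h1 : δx = δx + τ • (R *ᵥ δs))
    (h2 : δs = (-κ₁) • (L *ᵥ δx) + δs - κ₂ • δy + κ₁ • δw)
    (h3 : δy = (-p) • (L *ᵥ δx) + (1 - p) • δy + p • δw) :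
    δs = 0 ∧ δy = 0 ∧ L *ᵥ δx = δw :=
  stmt18_general (L := (L *ᵥ ·)) (R := (R *ᵥ ·))
    (fun _ => eq_zero_of_isDiag_of_mulVec_eq_zero hRdiag fun i => (hRpos i).ne') hκ hp hτ h1 h2 h3
end
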